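/- arXiv:1711.03281 — 5 statements merged into one kernel-verified Lean document; each statement's English description precedes it below -/
import Mathlib

section
/- The kernel −C_Ω is positive semidefinite on the exterior of Ω: for any finite collection of points z_1, …, z_n ∈ ℂ \ closure(Ω) and complex numbers c_1, …, c_n, the sum Σ_{j,k=1}^n c_j · conj(c_k) · (−C_Ω(z_j, z_k)) is a nonnegative real number. -/
open Complex MeasureTheory Filter Topology Bornology

/-- The double Cauchy transform `C_Ω(z,w) = −(1/π) ∫_Ω dA(ζ)/((ζ−z)(conj ζ − conj w))`. -/
noncomputable def doubleCauchy (Ω : Set ℂ) (z w : ℂ) : ℂ :=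
  -(1 / (Real.pi : ℂ)) *
    ∫ ζ in Ω, ((ζ - z) * ((starRingEnd ℂ) ζ - (starRingEnd ℂ) w))⁻¹

/-- The kernel `−C_Ω` is positive semidefinite on the exterior of `Ω`. -/
theorem neg_doubleCauchy_posSemidef_exterior
    (Ω : Set ℂ) (hΩopen : IsOpen Ω) (hΩbdd : Bornology.IsBounded Ω)
    (hΩconn : IsConnected Ω) (hΩsc : SimplyConnectedSpace Ω)
    (γ : ℝ → ℂ) (hγan : ∀ t, AnalyticAt ℝ γ t)
    (hγper : Function.Periodic γ (2 * Real.pi))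
    (hγ' : ∀ t, deriv γ t ≠ 0)
    (hΓ : frontier Ω = Set.range γ)
    (n : ℕ) (z : Fin n → ℂ) (hz : ∀ j, z j ∉ closure Ω) (c : Fin n → ℂ) :
    0 ≤ (∑ j : Fin n, ∑ k : Fin n,
        c j * (starRingEnd ℂ) (c k) * (-(doubleCauchy Ω (z j) (z k)))).re ∧
    (∑ j : Fin n, ∑ k : Fin n,
        c j * (starRingEnd ℂ) (c k) * (-(doubleCauchy Ω (z j) (z k)))).im = 0 := by
  have hI : ∀ j k, IntegrableOn (fun ζ : ℂ =>
      ((ζ - z j) * ((starRingEnd ℂ) ζ - (starRingEnd ℂ) (z k)))⁻¹) Ω := by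
    intro j k
    have hc : IsCompact (closure Ω) := hΩbdd.isCompact_closure
    refine IntegrableOn.mono_set (ContinuousOn.integrableOn_compact hc ?_) subset_closure
    refine ContinuousOn.inv₀ (by fun_prop) ?_
    intro ζ hζ
    have h1 : ζ ≠ z j := fun h => hz j (h ▸ hζ)
    have h2 : ζ ≠ z k := fun h => hz k (h ▸ hζ)
    refine mul_ne_zero (sub_ne_zero.2 h1) ?_
    rw [← map_sub]
    exact (map_ne_zero _).2 (sub_ne_zero.2 h2)
  have key : (∑ j : Fin n, ∑ k : Fin n,
        c j * (starRingEnd ℂ) (c k) * (-(doubleCauchy Ω (z j) (z k)))) =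
      ((1 / Real.pi * ∫ ζ in Ω, Complex.normSq (∑ j, c j * (ζ - z j)⁻¹) : ℝ) : ℂ) := by
    have e : ∀ ζ : ℂ, ((Complex.normSq (∑ j, c j * (ζ - z j)⁻¹) : ℝ) : ℂ) =
        ∑ j, ∑ k, c j * (starRingEnd ℂ) (c k) *
          ((ζ - z j) * ((starRingEnd ℂ) ζ - (starRingEnd ℂ) (z k)))⁻¹ := by
      intro ζ
      rw [← Complex.mul_conj, map_sum, Finset.sum_mul_sum]
      refine Finset.sum_congr rfl fun j _ => Finset.sum_congr rfl fun k _ => ?_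
      simp only [map_mul, map_inv₀, map_sub, mul_inv]
      ring
    rw [Complex.ofReal_mul, ← integral_complex_ofReal]
    simp_rw [e]
    rw [integral_finsetSum _ fun j _ => integrable_finsetSum _ fun k _ => (hI j k).const_mul _,
      Finset.mul_sum]
    refine Finset.sum_congr rfl fun j _ => ?_
    rw [integral_finsetSum _ fun k _ => (hI j k).const_mul _, Finset.mul_sum]
    refine Finset.sum_congr rfl fun k _ => ?_
    rw [integral_const_mul, doubleCauchy]
    push_cast
    ring
  rw [key]
  refine ⟨?_, Complex.ofReal_im _⟩
  rw [Complex.ofReal_re]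
  exact mul_nonneg (by positivity) (integral_nonneg fun ζ => Complex.normSq_nonneg _)
end

section
/- The reciprocal of the exponential transform is positive semidefinite on the exterior of Ω: for any finite collection of points z_1, …, z_n ∈ ℂ \ closure(Ω) and complex numbers c_1, …, c_n, the sum Σ_{j,k=1}^n c_j · conj(c_k) · exp(−C_Ω(z_j, z_k)) = Σ_{j,k=1}^n c_j · conj(c_k) / E_Ω(z_j, z_k) is a nonnegative real number. -/
open Complex MeasureTheory Filter Topology Bornology

section Helpers

open scoped ComplexOrder Matrix

/-- Entrywise exponential of a positive semidefinite matrix has nonnegative quadratic form. -/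
lemma exp_quad_nonneg {n : ℕ} (M : Matrix (Fin n) (Fin n) ℂ) (hM : M.PosSemidef)
    (c : Fin n → ℂ) :
    0 ≤ ∑ j : Fin n, ∑ k : Fin n, c j * (starRingEnd ℂ) (c k) * Complex.exp (M j k) := by
  have hpow : ∀ m : ℕ, (Matrix.of fun j k => (M j k) ^ m).PosSemidef := by
    intro m
    induction m with
    | zero =>
      have h := Matrix.posSemidef_vecMulVec_self_star (fun _ : Fin n => (1 : ℂ))
      convert h using 1
      ext j k
      simp [Matrix.vecMulVec]
    | succ m ih =>
      have h := ih.hadamard hM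
      have e : (Matrix.of fun j k => (M j k) ^ (m + 1)) =
          (Matrix.of fun j k => (M j k) ^ m) ⊙ M := by
        ext j k
        simp [pow_succ]
      rw [e]
      exact h
  have hquad : ∀ m : ℕ, 0 ≤ ∑ j : Fin n, ∑ k : Fin n,
      c j * (starRingEnd ℂ) (c k) * ((M j k) ^ m / (m.factorial : ℂ)) := by
    intro m
    have h := (hpow m).dotProduct_mulVec_nonneg (fun k => (starRingEnd ℂ) (c k))
    have h2 : (0 : ℂ) ≤ ((m.factorial : ℂ))⁻¹ := by
      have : (0 : ℂ) ≤ (((m.factorial : ℝ)⁻¹ : ℝ) : ℂ) :=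
        Complex.zero_le_real.mpr (by positivity)
      simpa using this
    have h3 := mul_nonneg h2 h
    convert h3 using 1
    simp only [dotProduct, Matrix.mulVec, Finset.mul_sum]
    refine Finset.sum_congr rfl fun j _ => Finset.sum_congr rfl fun k _ => ?_
    simp
    ring
  have hs : HasSum (fun m : ℕ => ∑ j : Fin n, ∑ k : Fin n,
      c j * (starRingEnd ℂ) (c k) * ((M j k) ^ m / (m.factorial : ℂ)))
      (∑ j : Fin n, ∑ k : Fin n, c j * (starRingEnd ℂ) (c k) * Complex.exp (M j k)) := by
    refine hasSum_sum fun j _ => hasSum_sum fun k _ => ?_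
    refine HasSum.mul_left _ ?_
    rw [Complex.exp_eq_exp_ℂ]
    exact NormedSpace.expSeries_div_hasSum_exp (M j k)
  exact hs.nonneg hquad

lemma doubleCauchy_integrable {Ω : Set ℂ} (hb : Bornology.IsBounded Ω) {z w : ℂ}
    (hz : z ∉ closure Ω) (hw : w ∉ closure Ω) :
    IntegrableOn (fun ζ => ((ζ - z) * ((starRingEnd ℂ) ζ - (starRingEnd ℂ) w))⁻¹) Ω := by
  have hc : IsCompact (closure Ω) := hb.isCompact_closure
  refine (ContinuousOn.integrableOn_compact hc ?_).mono_set subset_closure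
  refine ContinuousOn.inv₀ (by fun_prop) ?_
  intro ζ hζ
  refine mul_ne_zero (sub_ne_zero.mpr ?_) (sub_ne_zero.mpr ?_)
  · rintro rfl; exact hz hζ
  · intro h
    have := (starRingEnd ℂ).injective h
    subst this
    exact hw hζ

lemma doubleCauchy_quad {Ω : Set ℂ} (hb : Bornology.IsBounded Ω) {n : ℕ} (z : Fin n → ℂ)
    (hz : ∀ j, z j ∉ closure Ω) (c : Fin n → ℂ) :
    ∑ j, ∑ k, star (c j) * (-(doubleCauchy Ω (z j) (z k))) * c k =
      (((1 / Real.pi) * ∫ ζ in Ω, Complex.normSq (∑ j, star (c j) * (ζ - z j)⁻¹) : ℝ) : ℂ) := by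
  have h1 : ∀ ζ : ℂ, ((Complex.normSq (∑ j, star (c j) * (ζ - z j)⁻¹) : ℝ) : ℂ) =
      ∑ j, ∑ k, (star (c j) * c k) *
        ((ζ - z j) * ((starRingEnd ℂ) ζ - (starRingEnd ℂ) (z k)))⁻¹ := by
    intro ζ
    rw [← Complex.mul_conj, map_sum, Finset.sum_mul_sum]
    refine Finset.sum_congr rfl fun j _ => Finset.sum_congr rfl fun k _ => ?_
    simp [mul_inv]
    ring
  push_cast
  rw [← integral_complex_ofReal]
  have h2 := fun j k => (doubleCauchy_integrable hb (hz j) (hz k)).const_mul (star (c j) * c k)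
  simp_rw [h1]
  rw [integral_finsetSum _ fun j _ => integrable_finsetSum _ fun k _ => h2 j k, Finset.mul_sum]
  refine Finset.sum_congr rfl fun j _ => ?_
  rw [integral_finsetSum _ fun k _ => h2 j k, Finset.mul_sum]
  refine Finset.sum_congr rfl fun k _ => ?_
  rw [integral_const_mul, doubleCauchy]
  ring

lemma doubleCauchy_conj (Ω : Set ℂ) (z w : ℂ) :
    star (doubleCauchy Ω z w) = doubleCauchy Ω w z := by
  simp only [doubleCauchy, star_mul', RCLike.star_def]
  rw [← integral_conj]
  simp [mul_comm]

lemma doubleCauchy_posSemidef {Ω : Set ℂ} (hb : Bornology.IsBounded Ω) {n : ℕ} (z : Fin n → ℂ)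
    (hz : ∀ j, z j ∉ closure Ω) :
    (Matrix.of fun j k => -(doubleCauchy Ω (z j) (z k))).PosSemidef := by
  refine Matrix.PosSemidef.of_dotProduct_mulVec_nonneg ?_ ?_
  · ext j k
    simp only [Matrix.conjTranspose_apply, Matrix.of_apply, star_neg, doubleCauchy_conj]
  · intro x
    have h := doubleCauchy_quad hb z hz x
    have h0 : (0 : ℂ) ≤ (((1 / Real.pi) *
        ∫ ζ in Ω, Complex.normSq (∑ j, star (x j) * (ζ - z j)⁻¹) : ℝ) : ℂ) := by
      refine Complex.zero_le_real.mpr (mul_nonneg (by positivity) ?_)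
      exact integral_nonneg fun _ => Complex.normSq_nonneg _
    rw [← h] at h0
    convert h0 using 1
    simp only [dotProduct, Matrix.mulVec, Finset.mul_sum]
    refine Finset.sum_congr rfl fun j _ => Finset.sum_congr rfl fun k _ => ?_
    simp [mul_assoc]



end Helpers

/-- The reciprocal `1/E_Ω = exp(−C_Ω)` of the exponential transform is
positive semidefinite on the exterior of `Ω`. -/
theorem inv_expTransform_posSemidef_exterior
    (Ω : Set ℂ) (hΩopen : IsOpen Ω) (hΩbdd : Bornology.IsBounded Ω)
    (hΩconn : IsConnected Ω) (hΩsc : SimplyConnectedSpace Ω)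
    (γ : ℝ → ℂ) (hγan : ∀ t, AnalyticAt ℝ γ t)
    (hγper : Function.Periodic γ (2 * Real.pi))
    (hγ' : ∀ t, deriv γ t ≠ 0)
    (hΓ : frontier Ω = Set.range γ)
    (n : ℕ) (z : Fin n → ℂ) (hz : ∀ j, z j ∉ closure Ω) (c : Fin n → ℂ) :
    0 ≤ (∑ j : Fin n, ∑ k : Fin n,
        c j * (starRingEnd ℂ) (c k) * Complex.exp (-(doubleCauchy Ω (z j) (z k)))).re ∧
    (∑ j : Fin n, ∑ k : Fin n,
        c j * (starRingEnd ℂ) (c k) * Complex.exp (-(doubleCauchy Ω (z j) (z k)))).im = 0 := by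
  have h := exp_quad_nonneg _ (doubleCauchy_posSemidef hΩbdd z hz) c
  have h2 := Complex.nonneg_iff.mp h
  exact ⟨h2.1, h2.2.symm⟩
end

section
/- Fix w ∈ ℂ \ closure(Ω). Then there exists a holomorphic function G on Ω such that G(z) = E_Ω(z,w)/(conj(z) − conj(w)) for all z ∈ Ω; that is, the function z ↦ E_Ω(z,w)/(conj(z) − conj(w)) is holomorphic on Ω. -/
open Complex MeasureTheory Filter Topology Bornology

/-- The exponential transform `E_Ω(z,w) = exp (C_Ω(z,w))`. -/
noncomputable def expTransform (Ω : Set ℂ) (z w : ℂ) : ℂ :=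
  Complex.exp (doubleCauchy Ω z w)


lemma kernel_integrableOn (Ω : Set ℂ) (hb : Bornology.IsBounded Ω) (z : ℂ) :
    IntegrableOn (fun ζ : ℂ => (ζ - z)⁻¹) Ω := by
  obtain ⟨r, hr⟩ := hb.subset_ball z
  refine IntegrableOn.mono_set ?_ hr
  have h0 : IntegrableOn (fun x : ℂ => ‖x‖⁻¹) (Metric.ball 0 r) := by
    have := (integrableOn_fun_norm_addHaar (E := ℂ) (volume : Measure ℂ) (f := fun y : ℝ => y⁻¹)
      (r := r)).2 ?_
    · exact this
    · have hc : IntegrableOn (fun _ : ℝ => (1:ℝ)) (Set.Ioo 0 r) := by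
        simp [integrableOn_const_iff]
      refine hc.congr_fun ?_ measurableSet_Ioo
      intro y hy
      have : y ≠ 0 := hy.1.ne'
      simp [this]
  have h1 : IntegrableOn (fun x : ℂ => x⁻¹) (Metric.ball 0 r) := by
    refine Integrable.mono' h0 (by fun_prop) ?_
    filter_upwards with x
    simp
  have hmp : MeasurePreserving (fun x : ℂ => x - z) volume volume :=
    measurePreserving_sub_right volume z
  have := (hmp.integrableOn_comp_preimage (f := fun x : ℂ => x⁻¹) (s := Metric.ball 0 r)
    (MeasurableEquiv.subRight z).measurableEmbedding).2 h1
  have hset : Metric.ball z r = (fun x : ℂ => x - z) ⁻¹' Metric.ball 0 r := by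
    ext x
    simp only [Set.mem_preimage, Metric.mem_ball, dist_eq_norm, sub_zero]
  rw [hset]
  exact this

noncomputable def dbar (h : ℂ → ℂ) (ζ : ℂ) : ℂ :=
  (1 / 2) * (fderiv ℝ h ζ 1 + I * fderiv ℝ h ζ I)

lemma dbar_continuous {h : ℂ → ℂ} (hh : ContDiff ℝ 1 h) : Continuous (dbar h) := by
  have := hh.continuous_fderiv one_ne_zero
  unfold dbar
  fun_prop

/-- polar derivative pieces are integrable -/
lemma polar_integrable (g : ℂ → ℝ → ℂ) (hg : Continuous (fun p : ℂ × ℝ => g p.1 p.2))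
    (z : ℂ) (R : ℝ) (hR : ∀ ζ, R < ‖ζ - z‖ → ∀ θ, g ζ θ = 0) :
    IntegrableOn (fun p : ℝ × ℝ => g (z + p.1 * exp (p.2 * I)) p.2)
      (Set.Ioi 0 ×ˢ Set.Ioo (-Real.pi) Real.pi) (volume.prod volume) := by
  have hc : Continuous (fun p : ℝ × ℝ => g (z + p.1 * exp (p.2 * I)) p.2) := by
    exact hg.comp (f := fun p : ℝ × ℝ => ((z + p.1 * exp (p.2 * I) : ℂ), p.2)) (by fun_prop)
  have hK : IsCompact (Set.Icc (0:ℝ) R ×ˢ Set.Icc (-Real.pi) Real.pi) :=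
    isCompact_Icc.prod isCompact_Icc
  have hi := hc.continuousOn.integrableOn_compact (μ := (volume.prod volume)) hK
  refine hi.of_forall_sdiff_eq_zero (measurableSet_Ioi.prod measurableSet_Ioo) ?_
  rintro ⟨r, θ⟩ ⟨⟨hr, hθ⟩, hn⟩
  apply hR
  simp only [Set.mem_prod, Set.mem_Icc, Set.mem_Ioi, Set.mem_Ioo] at hr hθ hn
  have : R < r := by
    by_contra! h
    exact hn ⟨⟨hr.le, h⟩, hθ.1.le, hθ.2.le⟩
  simpa [abs_of_pos hr] using this

lemma cauchy_pompeiu {h : ℂ → ℂ} (hh : ContDiff ℝ 1 h) (hs : HasCompactSupport h) (z : ℂ) :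
    ∫ ζ, dbar h ζ * (ζ - z)⁻¹ = -(Real.pi : ℂ) * h z := by
  have hfc := hh.continuous_fderiv one_ne_zero
  have hhd : ∀ x, HasFDerivAt h (fderiv ℝ h x) x :=
    fun x => (hh.differentiable one_ne_zero x).hasFDerivAt
  obtain ⟨R, hR⟩ := hs.isCompact.isBounded.subset_closedBall z
  have hsupp : ∀ ζ, R < ‖ζ - z‖ → fderiv ℝ h ζ = 0 := by
    intro ζ hζ
    by_contra hne
    have h1 : ζ ∈ tsupport h := tsupport_fderiv_subset ℝ (subset_tsupport _ hne)
    have := hR h1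
    rw [Metric.mem_closedBall, dist_eq_norm] at this
    linarith
  have hsupp0 : ∀ ζ, R < ‖ζ - z‖ → h ζ = 0 := by
    intro ζ hζ
    by_contra hne
    have h1 : ζ ∈ tsupport h := subset_tsupport _ hne
    have := hR h1
    rw [Metric.mem_closedBall, dist_eq_norm] at this
    linarith
  let A : ℝ × ℝ → ℂ := fun p => fderiv ℝ h (z + p.1 * exp (p.2 * I)) (exp (p.2 * I))
  let B : ℝ × ℝ → ℂ := fun p => fderiv ℝ h (z + p.1 * exp (p.2 * I)) (I * exp (p.2 * I))
  have hA : IntegrableOn A (Set.Ioi 0 ×ˢ Set.Ioo (-Real.pi) Real.pi) (volume.prod volume) := by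
    refine polar_integrable (fun ζ θ => fderiv ℝ h ζ (exp (θ * I))) ?_ z R ?_
    · exact (hfc.comp continuous_fst).clm_apply (by fun_prop)
    · intro ζ hζ θ; simp [hsupp ζ hζ]
  have hB : IntegrableOn B (Set.Ioi 0 ×ˢ Set.Ioo (-Real.pi) Real.pi) (volume.prod volume) := by
    refine polar_integrable (fun ζ θ => fderiv ℝ h ζ (I * exp (θ * I))) ?_ z R ?_
    · exact (hfc.comp continuous_fst).clm_apply (by fun_prop)
    · intro ζ hζ θ; simp [hsupp ζ hζ]
  have e1 : ∫ ζ, dbar h ζ * (ζ - z)⁻¹ = ∫ ζ, dbar h (z + ζ) * ζ⁻¹ := by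
    rw [← integral_add_left_eq_self _ z]
    simp
  have e2 : ∫ ζ, dbar h (z + ζ) * ζ⁻¹ =
      ∫ p in Set.Ioi 0 ×ˢ Set.Ioo (-Real.pi) Real.pi,
        ((1/2 : ℂ) * A p + (I / 2) * B p) ∂(volume.prod volume) := by
    rw [← Complex.integral_comp_polarCoord_symm, polarCoord_target]
    refine setIntegral_congr_fun (measurableSet_Ioi.prod measurableSet_Ioo) ?_
    rintro ⟨r, θ⟩ ⟨hr, hθ⟩
    have hr0 : (r : ℂ) ≠ 0 := by exact_mod_cast (ne_of_gt hr)
    have hex : exp (θ * I) = Real.cos θ + Real.sin θ * I := by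
      rw [exp_mul_I]; simp
    have he0 := exp_ne_zero (θ * I)
    simp only [Complex.polarCoord_symm_apply, A, B, ← hex, dbar]
    set L := fderiv ℝ h (z + r * exp (θ * I))
    have l1 : L (exp (θ * I)) = Real.cos θ * L 1 + Real.sin θ * L I := by
      have : exp (θ * I) = Real.cos θ • (1:ℂ) + Real.sin θ • I := by
        rw [hex]; simp
      rw [this, map_add, map_smul, map_smul]; simp
    have l2 : L (I * exp (θ * I)) = -Real.sin θ * L 1 + Real.cos θ * L I := by
      have : I * exp (θ * I) = (-Real.sin θ) • (1:ℂ) + Real.cos θ • I := by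
        rw [hex]; simp; ring_nf; simp; ring
      rw [this, map_add, map_smul, map_smul]; simp
    have hinv : (exp (θ * I))⁻¹ = Real.cos θ - Real.sin θ * I := by
      rw [← exp_neg, ← neg_mul, exp_mul_I]; simp; ring
    rw [l1, l2, mul_inv, hinv, real_smul]
    field_simp
    ring_nf
    simp only [I_sq]
    ring
  have e3 : ∫ p in Set.Ioi 0 ×ˢ Set.Ioo (-Real.pi) Real.pi, A p ∂(volume.prod volume)
      = -(2 * Real.pi : ℂ) * h z := by
    have : ∫ p in Set.Ioi 0 ×ˢ Set.Ioo (-Real.pi) Real.pi, A p ∂(volume.prod volume)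
      = ∫ θ in Set.Ioo (-Real.pi) Real.pi, ∫ r in Set.Ioi (0:ℝ), A (r, θ) := by
      rw [← Measure.prod_restrict]
      rw [integral_prod_symm]
      rw [Measure.prod_restrict]; exact hA
    rw [this]
    have hin : ∀ θ : ℝ, ∫ r in Set.Ioi (0:ℝ), A (r, θ) = - h z := by
      intro θ
      have hd : ∀ r : ℝ, HasDerivAt (fun r : ℝ => h (z + r * exp (θ * I))) (A (r, θ)) r := by
        intro r
        have h1 : HasDerivAt (fun r : ℝ => z + r * exp (θ * I)) (exp (θ * I)) r := by
          simpa using ((hasDerivAt_id r).ofReal_comp.mul_const (exp (θ * I))).const_add z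
        exact (hhd _).comp_hasDerivAt r h1
      have hz : ∀ r : ℝ, R < r → 0 < r → R < ‖z + r * exp (θ * I) - z‖ := by
        intro r h1 h2
        simpa [abs_of_pos h2] using h1
      rw [integral_Ioi_of_hasDerivAt_of_tendsto' (fun r _ => hd r) (m := 0)]
      · simp
      · have hc : Continuous (fun r : ℝ => A (r, θ)) := by
          exact (hfc.comp (by fun_prop)).clm_apply (by fun_prop)
        refine (hc.continuousOn.integrableOn_compact (isCompact_Icc (a := 0) (b := R))).of_forall_sdiff_eq_zero
          measurableSet_Ioi ?_
        rintro r ⟨hr, hn⟩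
        have hr' : 0 < r := hr
        have : R < r := by
          by_contra! h
          exact hn ⟨hr'.le, h⟩
        simp [A, hsupp _ (hz r this hr)]
      · refine tendsto_const_nhds.congr' ?_
        filter_upwards [eventually_gt_atTop R, eventually_gt_atTop 0] with r h1 h2
        exact (hsupp0 _ (hz r h1 h2)).symm
    simp only [hin]
    have hpi := Real.pi_pos.le
    simp only [integral_const, measureReal_restrict_apply_univ, Real.volume_real_Ioo,
      real_smul]
    rw [max_eq_left (by linarith)]
    push_cast; ring
  have e4 : ∫ p in Set.Ioi 0 ×ˢ Set.Ioo (-Real.pi) Real.pi, B p ∂(volume.prod volume) = 0 := by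
    rw [setIntegral_prod _ hB]
    refine setIntegral_eq_zero_of_forall_eq_zero ?_
    intro r hr
    have hr0 : (r : ℂ) ≠ 0 := by exact_mod_cast (ne_of_gt hr)
    rw [← integral_Ioc_eq_integral_Ioo,
      ← intervalIntegral.integral_of_le (by linarith [Real.pi_pos])]
    have hd : ∀ θ : ℝ, HasDerivAt (fun θ : ℝ => (r:ℂ)⁻¹ * h (z + r * exp (θ * I))) (B (r, θ)) θ := by
      intro θ
      have h0 : HasDerivAt (fun θ : ℝ => exp (θ * I)) (I * exp (θ * I)) θ := by
        simpa [mul_comm] using ((hasDerivAt_id θ).ofReal_comp.mul_const I).cexp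
      have h1 : HasDerivAt (fun θ : ℝ => z + r * exp (θ * I)) (r * (I * exp (θ * I))) θ :=
        (h0.const_mul (r:ℂ)).const_add z
      have h2 := ((hhd _).comp_hasDerivAt θ h1).const_mul (r:ℂ)⁻¹
      refine h2.congr_deriv ?_
      have : (r:ℂ) * (I * exp (θ * I)) = r • (I * exp (θ * I)) := by simp
      rw [this, map_smul, real_smul]
      simp only [B]
      field_simp
    rw [intervalIntegral.integral_eq_sub_of_hasDerivAt (fun θ _ => hd θ)]
    · simp [exp_neg]
    · apply Continuous.intervalIntegrable
      exact (hfc.comp (by fun_prop)).clm_apply (by fun_prop)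
  rw [e1, e2, integral_add (hA.const_mul _) (hB.const_mul _), integral_const_mul,
    integral_const_mul, e3, e4]
  ring

lemma cauchy_transform_differentiableAt {Ω : Set ℂ} (φ : ℂ → ℂ) (hφ : IntegrableOn φ Ω) (z₀ : ℂ) (r : ℝ)
    (hr : 0 < r) (h0 : ∀ ζ ∈ Metric.ball z₀ r, φ ζ = 0) :
    DifferentiableAt ℂ (fun z => ∫ ζ in Ω, φ ζ * (ζ - z)⁻¹) z₀ := by
  have hm : ∀ z : ℂ, AEStronglyMeasurable (fun ζ : ℂ => (ζ - z)⁻¹) (volume.restrict Ω) := by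
    intro z
    exact (by fun_prop : Measurable (fun ζ : ℂ => (ζ - z)⁻¹)).aestronglyMeasurable
  have hfar : ∀ ζ ∉ Metric.ball z₀ r, ∀ z ∈ Metric.ball z₀ (r/2), r / 2 ≤ ‖ζ - z‖ := by
    intro ζ hζ z hz
    rw [Metric.mem_ball, not_lt] at hζ
    rw [Metric.mem_ball] at hz
    rw [← dist_eq_norm]
    have := dist_triangle ζ z z₀
    linarith
  have key := hasDerivAt_integral_of_dominated_loc_of_deriv_le (μ := volume.restrict Ω)
    (F := fun z ζ => φ ζ * (ζ - z)⁻¹) (F' := fun z ζ => φ ζ * ((ζ - z)⁻¹)^2) (x₀ := z₀)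
    (s := Metric.ball z₀ (r/2)) (bound := fun ζ => ‖φ ζ‖ * ((r/2)⁻¹)^2)
    (Metric.ball_mem_nhds _ (by linarith))
    (Eventually.of_forall fun z => hφ.1.mul (hm z)) ?_ (hφ.1.mul ((hm z₀).pow 2)) ?_
    (hφ.norm.mul_const _) ?_
  · exact key.2.differentiableAt
  · refine Integrable.mono' (hφ.norm.mul_const (r/2)⁻¹) (hφ.1.mul (hm _)) ?_
    filter_upwards with ζ
    by_cases hζ : ζ ∈ Metric.ball z₀ r
    · simp [h0 ζ hζ]
    · rw [norm_mul, norm_inv]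
      gcongr
      exact hfar ζ hζ z₀ (Metric.mem_ball_self (by linarith))
  · filter_upwards with ζ z hz
    by_cases hζ : ζ ∈ Metric.ball z₀ r
    · simp [h0 ζ hζ]
    · rw [norm_mul, norm_pow, norm_inv]
      gcongr
      exact hfar ζ hζ z hz
  · filter_upwards with ζ z hz
    by_cases hζ : ζ ∈ Metric.ball z₀ r
    · simp only [h0 ζ hζ, zero_mul]; exact hasDerivAt_const _ _
    · have hne : ζ - z ≠ 0 := by
        have := hfar ζ hζ z hz
        rw [← norm_pos_iff]; linarith
      have := (((hasDerivAt_id z).const_sub ζ).inv hne).const_mul (φ ζ)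
      refine this.congr_deriv ?_
      simp

lemma bounded_mul_kernel (Ω : Set ℂ) (hΩ : MeasurableSet Ω) (hb : Bornology.IsBounded Ω) (g : ℂ → ℂ)
    (hg : AEStronglyMeasurable g (volume.restrict Ω)) (M : ℝ) (hM : ∀ ζ ∈ Ω, ‖g ζ‖ ≤ M) (z : ℂ) :
    IntegrableOn (fun ζ => g ζ * (ζ - z)⁻¹) Ω := by
  have hk := kernel_integrableOn Ω hb z
  refine Integrable.bdd_mul (c := M) hk hg ?_
  filter_upwards [ae_restrict_mem hΩ] with ζ hζ using hM ζ hζ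

/-- A compactly supported `C^1` function which near `z₀` is the antiholomorphic logarithm. -/
lemma exists_local_log (z₀ w : ℂ) (ρ : ℝ) (hρ : 0 < ρ) (hw : w ∉ Metric.ball z₀ ρ) :
    ∃ (h : ℂ → ℂ) (r : ℝ), 0 < r ∧ r < ρ ∧ ContDiff ℝ 1 h ∧ HasCompactSupport h ∧
      tsupport h ⊆ Metric.ball z₀ ρ ∧
      (∀ ζ ∈ Metric.ball z₀ r, dbar h ζ = ((starRingEnd ℂ) ζ - (starRingEnd ℂ) w)⁻¹) ∧
      (∀ ζ ∈ Metric.ball z₀ r, exp (h ζ) =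
        ((starRingEnd ℂ) ζ - (starRingEnd ℂ) w) / ((starRingEnd ℂ) z₀ - (starRingEnd ℂ) w)) := by
  have hdist : ρ ≤ ‖z₀ - w‖ := by
    rw [Metric.mem_ball, not_lt, dist_comm, dist_eq_norm] at hw
    exact hw
  have hz0 : z₀ - w ≠ 0 := by rw [← norm_pos_iff]; linarith
  have hslit : ∀ ζ ∈ Metric.ball z₀ ρ, (ζ - w) / (z₀ - w) ∈ slitPlane := by
    intro ζ hζ
    rw [Metric.mem_ball, dist_eq_norm] at hζ
    apply Complex.ball_one_subset_slitPlane
    rw [Metric.mem_ball, dist_eq_norm]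
    have : (ζ - w) / (z₀ - w) - 1 = (ζ - z₀) / (z₀ - w) := by field_simp; ring
    rw [this, norm_div, div_lt_one (by linarith)]
    linarith
  let χ : ContDiffBump z₀ := ⟨ρ / 4, ρ / 2, by linarith, by linarith⟩
  let F : ℂ → ℂ := fun ζ => (starRingEnd ℂ) (Complex.log ((ζ - w) / (z₀ - w)))
  have hts : tsupport (fun ζ => (χ ζ : ℂ) * F ζ) ⊆ Metric.closedBall z₀ (ρ / 2) := by
    have h1 : tsupport (fun ζ => (χ ζ : ℂ) * F ζ) ⊆ tsupport χ := by
      apply closure_mono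
      intro ζ hζ hz
      apply hζ
      simp [hz]
    rw [χ.tsupport_eq] at h1
    exact h1
  have hsub : Metric.closedBall z₀ (ρ / 2) ⊆ Metric.ball z₀ ρ :=
    Metric.closedBall_subset_ball (by linarith)
  have hF : ∀ ζ ∈ Metric.ball z₀ ρ, ContDiffAt ℝ 1 F ζ := by
    intro ζ hζ
    have h1 : ContDiffAt ℂ 1 (fun ζ => Complex.log ((ζ - w) / (z₀ - w))) ζ := by
      have hq : ContDiffAt ℂ 1 (fun ζ : ℂ => (ζ - w) / (z₀ - w)) ζ :=
        (contDiffAt_id.sub contDiffAt_const).div_const _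
      exact (Complex.contDiffAt_log (hslit ζ hζ)).comp ζ hq
    have h2 := h1.restrict_scalars ℝ
    exact (Complex.conjCLE.contDiff.contDiffAt).comp ζ h2
  have heq : ∀ ζ ∈ Metric.ball z₀ (ρ / 4), (χ ζ : ℂ) * F ζ = F ζ := by
    intro ζ hζ
    rw [χ.one_of_mem_closedBall (Metric.ball_subset_closedBall hζ)]
    simp
  have hsub4 : Metric.ball z₀ (ρ / 4) ⊆ Metric.ball z₀ ρ := Metric.ball_subset_ball (by linarith)
  have hnum : ∀ ζ ∈ Metric.ball z₀ ρ, ζ - w ≠ 0 := by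
    intro ζ hζ h
    rw [sub_eq_zero] at h
    exact hw (h ▸ hζ)
  refine ⟨fun ζ => (χ ζ : ℂ) * F ζ, ρ / 4, by linarith, by linarith, ?_, ?_, hts.trans hsub, ?_, ?_⟩
  · rw [contDiff_iff_contDiffAt]
    intro ζ
    by_cases hζ : ζ ∈ Metric.ball z₀ ρ
    · have h1 : ContDiffAt ℝ 1 (fun ζ => (χ ζ : ℂ)) ζ :=
        Complex.ofRealCLM.contDiff.contDiffAt.comp ζ χ.contDiff.contDiffAt
      exact h1.mul (hF ζ hζ)
    · have : ζ ∉ tsupport (fun ζ => (χ ζ : ℂ) * F ζ) := fun h => hζ (hsub (hts h))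
      rw [notMem_tsupport_iff_eventuallyEq] at this
      exact contDiffAt_const.congr_of_eventuallyEq this
  · exact HasCompactSupport.of_support_subset_isCompact (isCompact_closedBall z₀ (ρ / 2))
      ((subset_tsupport _).trans hts)
  · intro ζ hζ
    have hev : (fun ζ => (χ ζ : ℂ) * F ζ) =ᶠ[𝓝 ζ] F := by
      filter_upwards [Metric.isOpen_ball.mem_nhds hζ] with y hy using heq y hy
    have hn := hnum ζ (hsub4 hζ)
    have h1 : HasDerivAt (fun ζ => Complex.log ((ζ - w) / (z₀ - w))) (ζ - w)⁻¹ ζ := by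
      have := (((hasDerivAt_id ζ).sub_const w).div_const (z₀ - w)).clog (hslit ζ (hsub4 hζ))
      refine this.congr_deriv ?_
      simp only [id]
      field_simp
    have h2 : HasFDerivAt F (((Complex.conjCLE : ℂ ≃L[ℝ] ℂ) : ℂ →L[ℝ] ℂ).comp
        (((ContinuousLinearMap.toSpanSingleton ℂ (ζ - w)⁻¹)).restrictScalars ℝ)) ζ :=
      (Complex.conjCLE.hasFDerivAt).comp ζ (h1.hasFDerivAt.restrictScalars ℝ)
    unfold dbar
    rw [hev.fderiv_eq, h2.fderiv]
    simp
    ring_nf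
    simp
    ring
  · intro ζ hζ
    have hn := hnum ζ (hsub4 hζ)
    show exp ((χ ζ : ℂ) * F ζ) = _
    rw [heq ζ hζ]
    simp only [F]
    rw [exp_conj, exp_log (div_ne_zero hn hz0)]
    simp

/-- For fixed `w` outside `closure Ω`, the function
`z ↦ E_Ω(z,w)/(conj z − conj w)` is holomorphic on `Ω`. -/
theorem interior_piece_G_holomorphic
    (Ω : Set ℂ) (hΩopen : IsOpen Ω) (hΩbdd : Bornology.IsBounded Ω)
    (hΩconn : IsConnected Ω) (hΩsc : SimplyConnectedSpace Ω)
    (γ : ℝ → ℂ) (hγan : ∀ t, AnalyticAt ℝ γ t)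
    (hγper : Function.Periodic γ (2 * Real.pi))
    (hγ' : ∀ t, deriv γ t ≠ 0)
    (hΓ : frontier Ω = Set.range γ)
    (w : ℂ) (hw : w ∉ closure Ω) :
    ∃ G : ℂ → ℂ, DifferentiableOn ℂ G Ω ∧
      ∀ z ∈ Ω, G z = expTransform Ω z w / ((starRingEnd ℂ) z - (starRingEnd ℂ) w) := by
  classical
  have hmeas := hΩopen.measurableSet
  refine ⟨fun z => expTransform Ω z w / ((starRingEnd ℂ) z - (starRingEnd ℂ) w), ?_, fun _ _ => rfl⟩
  intro z₀ hz₀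
  apply DifferentiableAt.differentiableWithinAt
  obtain ⟨ρ, hρ, hball⟩ := Metric.isOpen_iff.1 hΩopen z₀ hz₀
  have hwΩ : w ∉ Ω := fun h => hw (subset_closure h)
  obtain ⟨h, r, hr, hrρ, hC1, hcs, hts, hdb, hexp⟩ :=
    exists_local_log z₀ w ρ hρ (fun h => hwΩ (hball h))
  -- boundedness of the density
  obtain ⟨ε, hε, hεΩ⟩ := Metric.isOpen_iff.1 isClosed_closure.isOpen_compl w hw
  let f : ℂ → ℂ := fun ζ => ((starRingEnd ℂ) ζ - (starRingEnd ℂ) w)⁻¹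
  have hfb : ∀ ζ ∈ Ω, ‖f ζ‖ ≤ ε⁻¹ := by
    intro ζ hζ
    have h1 : ζ ∉ Metric.ball w ε := fun h => hεΩ h (subset_closure hζ)
    rw [Metric.mem_ball, not_lt, dist_eq_norm] at h1
    simp only [f]
    rw [norm_inv, ← map_sub, Complex.norm_conj]
    gcongr
  have hfm : AEStronglyMeasurable f (volume.restrict Ω) := by
    have hc : Measurable (fun ζ : ℂ => (starRingEnd ℂ) ζ) := Complex.continuous_conj.measurable
    exact (hc.sub_const _).inv.aestronglyMeasurable
  have hdc := dbar_continuous hC1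
  have hd0 : ∀ ζ ∉ tsupport h, dbar h ζ = 0 := by
    intro ζ hζ
    have : fderiv ℝ h ζ = 0 := by
      by_contra hne
      exact hζ (tsupport_fderiv_subset ℝ (subset_tsupport _ hne))
    simp [dbar, this]
  have hdcs : HasCompactSupport (dbar h) := HasCompactSupport.intro hcs hd0
  obtain ⟨M, hM⟩ := hdcs.exists_bound_of_continuous hdc
  have hdi : IntegrableOn (dbar h) Ω := (hdc.integrable_of_hasCompactSupport hdcs).integrableOn
  have hfin : volume Ω < ⊤ := hΩbdd.measure_lt_top
  have hfi : IntegrableOn f Ω :=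
    IntegrableOn.of_bound hfin hfm ε⁻¹ ((ae_restrict_mem hmeas).mono hfb)
  have hpi : (Real.pi : ℂ) ≠ 0 := by exact_mod_cast Real.pi_ne_zero
  have hsplit : ∀ z, doubleCauchy Ω z w =
      -(1 / (Real.pi : ℂ)) * (∫ ζ in Ω, (f ζ - dbar h ζ) * (ζ - z)⁻¹) + h z := by
    intro z
    have i1 := bounded_mul_kernel Ω hmeas hΩbdd f hfm _ hfb z
    have i2 := bounded_mul_kernel Ω hmeas hΩbdd (dbar h) hdc.aestronglyMeasurable _
      (fun ζ _ => hM ζ) z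
    have e0 : ∫ ζ in Ω, dbar h ζ * (ζ - z)⁻¹ = -(Real.pi : ℂ) * h z := by
      rw [← cauchy_pompeiu hC1 hcs z]
      apply setIntegral_eq_integral_of_forall_compl_eq_zero
      intro ζ hζ
      rw [hd0 ζ (fun h => hζ (hball (hts h))), zero_mul]
    have e1 : ∫ ζ in Ω, (f ζ - dbar h ζ) * (ζ - z)⁻¹ =
        (∫ ζ in Ω, f ζ * (ζ - z)⁻¹) - -(Real.pi : ℂ) * h z := by
      rw [← e0, ← integral_sub i1 i2]
      simp only [sub_mul]
    have e2 : ∫ ζ in Ω, ((ζ - z) * ((starRingEnd ℂ) ζ - (starRingEnd ℂ) w))⁻¹ =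
        ∫ ζ in Ω, f ζ * (ζ - z)⁻¹ := by
      simp only [mul_inv_rev, f]
    rw [e1, doubleCauchy, e2]
    field_simp
    ring
  have hdiff := cauchy_transform_differentiableAt (Ω := Ω) (fun ζ => f ζ - dbar h ζ) (hfi.sub hdi)
    z₀ r hr (fun ζ hζ => by simp only [f]; rw [hdb ζ hζ, sub_self])
  have hmain : DifferentiableAt ℂ (fun z => exp (-(1 / (Real.pi : ℂ)) *
      (∫ ζ in Ω, (f ζ - dbar h ζ) * (ζ - z)⁻¹)) / ((starRingEnd ℂ) z₀ - (starRingEnd ℂ) w)) z₀ :=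
    ((hdiff.const_mul _).cexp).div_const _
  refine hmain.congr_of_eventuallyEq ?_
  filter_upwards [Metric.ball_mem_nhds z₀ hr] with z hz
  have hzw : (starRingEnd ℂ) z - (starRingEnd ℂ) w ≠ 0 := by
    rw [← map_sub, map_ne_zero, sub_ne_zero]
    rintro rfl
    exact hwΩ (hball (Metric.ball_subset_ball hrρ.le hz))
  rw [expTransform, hsplit z, exp_add, hexp z hz]
  field_simp
end

section
/- Let S be the Schwarz function of Γ, holomorphic on an open neighborhood U of Γ, and fix w ∈ ℂ \ closure(Ω). Then there exist an open neighborhood V ⊆ U of Γ and holomorphic functions f₁ on Ω ∪ V and f₂ on (ℂ \ closure(Ω)) ∪ V such that: (i) f₁(z)·(S(z) − conj(w)) = f₂(z) for all z ∈ V; (ii) f₂(z) → 1 as z → ∞; (iii) f₂(z) = E_Ω(z,w) for all z ∈ ℂ \ closure(Ω) and f₁(z) = E_Ω(z,w)/(conj(z) − conj(w)) for all z ∈ Ω. Moreover, properties (i) and (ii) determine the pair uniquely: any pair (g₁, g₂), holomorphic on Ω ∪ V' and (ℂ \ closure(Ω)) ∪ V' for some open neighborhood V' ⊆ U of Γ and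 satisfying (i) and (ii), agrees with (f₁, f₂) on Ω and on ℂ \ closure(Ω) respectively. -/
open Complex MeasureTheory Filter Topology Bornology

lemma wedge_aux (f : ℂ → ℂ) {a b c d : ℝ}
    (Hc : ContinuousOn f (Set.uIcc a b ×ℂ Set.uIcc c d))
    (Hd : ∀ z ∈ Set.uIcc a b ×ℂ Set.uIcc c d, z.im ≠ 0 → DifferentiableAt ℂ f z)
    (h0 : (0:ℝ) ∉ Set.Ioo (min c d) (max c d)) :
    (∫ x : ℝ in a..b, f (x + c * I)) - (∫ x : ℝ in a..b, f (x + d * I)) +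
      I • (∫ y : ℝ in c..d, f (b + y * I)) -
      I • (∫ y : ℝ in c..d, f (a + y * I)) = 0 := by
  have := integral_boundary_rect_eq_zero_of_continuousOn_of_differentiableOn f (a + c * I) (b + d * I)
    (by simpa using Hc) (by
      intro z hz
      simp at hz
      refine (Hd z ?_ ?_).differentiableWithinAt
      · rw [mem_reProdIm] at hz ⊢
        simp only [Set.uIcc]
        exact ⟨⟨hz.1.1.le, hz.1.2.le⟩, ⟨hz.2.1.le, hz.2.2.le⟩⟩
      · intro h
        rw [mem_reProdIm, h] at hz
        exact h0 hz.2)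
  simpa using this

lemma differentiableOn_ball_of_off_real (f : ℂ → ℂ) (p : ℂ) (r : ℝ)
    (hc : ContinuousOn f (Metric.ball p r))
    (hd : ∀ z ∈ Metric.ball p r, z.im ≠ 0 → DifferentiableAt ℂ f z) :
    DifferentiableOn ℂ f (Metric.ball p r) := by
  refine IsExactOn.differentiableOn Metric.isOpen_ball ?_
  refine IsConservativeOn.isExactOn_ball (hf := ?_) (hf' := hc)
  intro z w hzw
  rw [← add_eq_zero_iff_eq_neg, wedgeIntegral_add_wedgeIntegral_eq]
  have hR : Set.uIcc z.re w.re ×ℂ Set.uIcc z.im w.im ⊆ Metric.ball p r := hzw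
  have Hc := hc.mono hR
  have Hd := fun x hx h => hd x (hR hx) h
  by_cases h0 : (0:ℝ) ∈ Set.uIcc z.im w.im
  · have s1 : Set.uIcc z.im 0 ⊆ Set.uIcc z.im w.im :=
      Set.uIcc_subset_uIcc Set.left_mem_uIcc h0
    have s2 : Set.uIcc 0 w.im ⊆ Set.uIcc z.im w.im :=
      Set.uIcc_subset_uIcc h0 Set.right_mem_uIcc
    have m : ∀ {s t : Set ℝ}, s ⊆ t → Set.uIcc z.re w.re ×ℂ s ⊆ Set.uIcc z.re w.re ×ℂ t := by
      intro s t h x hx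
      exact ⟨hx.1, h hx.2⟩
    have e1 := wedge_aux f (a := z.re) (b := w.re) (c := z.im) (d := 0) (Hc.mono (m s1))
      (fun x hx => Hd x (m s1 hx)) (by
        intro h; rcases le_total z.im 0 with h' | h' <;> simp [h'] at h)
    have e2 := wedge_aux f (a := z.re) (b := w.re) (c := 0) (d := w.im) (Hc.mono (m s2))
      (fun x hx => Hd x (m s2 hx)) (by
        intro h; rcases le_total w.im 0 with h' | h' <;> simp [h'] at h)
    have key : ∀ t ∈ Set.uIcc z.re w.re, ∀ c d : ℝ, Set.uIcc c d ⊆ Set.uIcc z.im w.im →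
        IntervalIntegrable (fun y : ℝ => f (t + y * I)) volume c d := by
      intro t ht c d hcd
      apply ContinuousOn.intervalIntegrable
      refine Hc.comp (by fun_prop) ?_
      intro y hy
      rw [mem_reProdIm]
      simpa using ⟨ht, hcd hy⟩
    have i1 := intervalIntegral.integral_add_adjacent_intervals
      (key z.re Set.left_mem_uIcc _ _ s1) (key z.re Set.left_mem_uIcc _ _ s2)
    have i2 := intervalIntegral.integral_add_adjacent_intervals
      (key w.re Set.right_mem_uIcc _ _ s1) (key w.re Set.right_mem_uIcc _ _ s2)
    rw [← i1, ← i2]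
    simp only [smul_eq_mul] at *
    linear_combination e1 + e2
  · refine wedge_aux f Hc Hd ?_
    intro h
    exact h0 ⟨h.1.le, h.2.le⟩

/-- Removability of a set that is mapped into the real line by a local coordinate. -/
lemma removable_local (F ψ : ℂ → ℂ) (p : ℂ) (Γ : Set ℂ)
    (hψ : AnalyticAt ℂ ψ p) (hψ' : deriv ψ p ≠ 0)
    (hreal : ∀ᶠ z in 𝓝 p, z ∈ Γ → (ψ z).im = 0)
    (hc : ∀ᶠ z in 𝓝 p, ContinuousAt F z)
    (hd : ∀ᶠ z in 𝓝 p, z ∉ Γ → DifferentiableAt ℂ F z) :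
    DifferentiableAt ℂ F p := by
  have hs : HasStrictDerivAt ψ (deriv ψ p) p := hψ.hasStrictDerivAt
  have hF := hs.hasStrictFDerivAt_equiv hψ'
  set φ := hF.localInverse ψ _ p with hφ
  have hcd : ContDiffAt ℂ 1 φ (ψ p) :=
    ContDiffAt.to_localInverse (hψ.contDiffAt) hF.hasFDerivAt (by simp)
  have hφd : ∀ᶠ y in 𝓝 (ψ p), DifferentiableAt ℂ φ y := by
    filter_upwards [hcd.eventually (by simp)] with y hy
    exact hy.differentiableAt (by simp)
  have hr : ∀ᶠ y in 𝓝 (ψ p), ψ (φ y) = y := hF.eventually_right_inverse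
  have hl : ∀ᶠ z in 𝓝 p, φ (ψ z) = z := hF.eventually_left_inverse
  have hφp : φ (ψ p) = p := hl.self_of_nhds
  have hφt : Tendsto φ (𝓝 (ψ p)) (𝓝 p) := by
    have := hφd.self_of_nhds.continuousAt.tendsto
    rwa [hφp] at this
  have hall := (((hφt.eventually hreal).and (hφt.eventually hc)).and (hφt.eventually hd)).and (hφd.and hr)
  obtain ⟨r, hr0, hball⟩ := Metric.eventually_nhds_iff_ball.1 hall
  have := differentiableOn_ball_of_off_real (F ∘ φ) (ψ p) r (by
      intro y hy
      obtain ⟨⟨⟨h1, h2⟩, h3⟩, h4, h5⟩ := hball y hy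
      exact (h2.comp h4.continuousAt).continuousWithinAt) (by
      intro y hy him
      obtain ⟨⟨⟨h1, h2⟩, h3⟩, h4, h5⟩ := hball y hy
      refine (h3 fun hm => him ?_).comp y h4
      have := h1 hm
      rwa [h5] at this)
  have hd1 : DifferentiableAt ℂ (F ∘ φ) (ψ p) :=
    this.differentiableAt (Metric.ball_mem_nhds _ hr0)
  have := hd1.comp p hψ.differentiableAt
  refine this.congr_of_eventuallyEq ?_
  filter_upwards [hl] with z hz
  simp [hz]

lemma removable_schwarz (F S : ℂ → ℂ) (Γ U V : Set ℂ) (hU : IsOpen U)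
    (hS : DifferentiableOn ℂ S U) (hSval : ∀ z ∈ Γ, S z = (starRingEnd ℂ) z)
    (hV : IsOpen V) (hVU : V ⊆ U) (hc : ContinuousOn F V)
    (hd : ∀ z ∈ V, z ∉ Γ → DifferentiableAt ℂ F z) : DifferentiableOn ℂ F V := by
  intro p hp
  refine DifferentiableAt.differentiableWithinAt ?_
  have hSa : AnalyticAt ℂ S p := hS.analyticAt (hU.mem_nhds (hVU hp))
  have hVp := hV.mem_nhds hp
  have hc' : ∀ᶠ z in 𝓝 p, ContinuousAt F z := by
    filter_upwards [hVp] with z hz using hc.continuousAt (hV.mem_nhds hz)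
  have hd' : ∀ᶠ z in 𝓝 p, z ∉ Γ → DifferentiableAt ℂ F z := by
    filter_upwards [hVp] with z hz using hd z hz
  by_cases h : deriv S p = -1
  · refine removable_local F (fun z => I * (z - S z)) p Γ (by fun_prop) ?_ ?_ hc' hd'
    · have : HasDerivAt (fun z => I * (z - S z)) (I * (1 - deriv S p)) p :=
        ((hasDerivAt_id p).sub hSa.differentiableAt.hasDerivAt).const_mul I
      rw [this.deriv, h]
      simp
    · refine Eventually.of_forall fun z hz => ?_
      simp [hSval z hz]
  · refine removable_local F (fun z => z + S z) p Γ (by fun_prop) ?_ ?_ hc' hd'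
    · have : HasDerivAt (fun z => z + S z) (1 + deriv S p) p :=
        ((hasDerivAt_id p).add hSa.differentiableAt.hasDerivAt)
      rw [this.deriv]
      intro h'
      exact h (by linear_combination h')
    · refine Eventually.of_forall fun z hz => ?_
      simp [hSval z hz]

lemma integrable_inv_norm (R : ℝ) :
    Integrable (Set.indicator (Metric.closedBall (0:ℂ) R) (fun u : ℂ => ‖u‖⁻¹)) := by
  have hm : Measurable (Set.indicator (Metric.closedBall (0:ℂ) R) (fun u : ℂ => ‖u‖⁻¹)) :=
    (measurable_norm.inv).indicator Metric.isClosed_closedBall.measurableSet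
  refine ⟨hm.aestronglyMeasurable, ?_⟩
  rw [HasFiniteIntegral, ← Complex.lintegral_comp_polarCoord_symm]
  have hle : ∀ p ∈ polarCoord.target, ENNReal.ofReal p.1 •
      ‖Set.indicator (Metric.closedBall (0:ℂ) R) (fun u : ℂ => ‖u‖⁻¹) (Complex.polarCoord.symm p)‖ₑ
      ≤ Set.indicator (Set.Ioc 0 R ×ˢ Set.Ioo (-Real.pi) Real.pi) (fun _ => (1:ENNReal)) p := by
    intro p hp
    have hp1 : 0 < p.1 := hp.1
    by_cases h : p.1 ≤ R
    · have hmem : p ∈ Set.Ioc 0 R ×ˢ Set.Ioo (-Real.pi) Real.pi := ⟨⟨hp1, h⟩, hp.2⟩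
      rw [Set.indicator_of_mem hmem, Set.indicator_of_mem (by
        rw [mem_closedBall_zero_iff, Complex.norm_polarCoord_symm, abs_of_pos hp1]; exact h),
        Complex.norm_polarCoord_symm, abs_of_pos hp1, Real.enorm_of_nonneg (by positivity),
        smul_eq_mul, ← ENNReal.ofReal_mul hp1.le, mul_inv_cancel₀ hp1.ne']
      simp
    · rw [Set.indicator_of_notMem (s := Metric.closedBall (0:ℂ) R) (by
        rw [mem_closedBall_zero_iff, Complex.norm_polarCoord_symm, abs_of_pos hp1]; exact h)]
      simp
  refine lt_of_le_of_lt (setLIntegral_mono' polarCoord.open_target.measurableSet hle) ?_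
  refine lt_of_le_of_lt (setLIntegral_le_lintegral _ _) ?_
  rw [lintegral_indicator (measurableSet_Ioc.prod measurableSet_Ioo), setLIntegral_one,
    Measure.volume_eq_prod, Measure.prod_prod]
  simp [ENNReal.mul_lt_top_iff]

lemma integral_polar (f : ℂ → ℂ) (hm : Measurable f) (hf : Integrable f) :
    ∫ u, f u = ∫ ρ in Set.Ioi (0:ℝ), ∫ θ in Set.Ioo (-Real.pi) Real.pi,
      (ρ : ℂ) * f (ρ * Complex.exp (θ * I)) := by
  rw [← Complex.integral_comp_polarCoord_symm]
  have hpc : ∀ p : ℝ × ℝ, Complex.polarCoord.symm p = p.1 * Complex.exp (p.2 * I) := by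
    intro p
    rw [Complex.polarCoord_symm_apply, Complex.exp_mul_I]
    push_cast; rfl
  have hint : IntegrableOn (fun p : ℝ × ℝ => p.1 • f (Complex.polarCoord.symm p))
      polarCoord.target := by
    refine ⟨?_, ?_⟩
    · simp_rw [hpc]
      refine Measurable.aestronglyMeasurable ?_
      refine measurable_fst.smul (hm.comp ?_)
      fun_prop
    · have h1 := hf.2
      rw [HasFiniteIntegral, ← Complex.lintegral_comp_polarCoord_symm] at h1
      rw [HasFiniteIntegral]
      refine lt_of_le_of_lt (setLIntegral_mono' polarCoord.open_target.measurableSet ?_) h1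
      intro p hp
      have hp1 : 0 < p.1 := hp.1
      rw [enorm_smul, Real.enorm_of_nonneg hp1.le]
      rfl
  have ht : polarCoord.target = Set.Ioi (0:ℝ) ×ˢ Set.Ioo (-Real.pi) Real.pi := rfl
  rw [ht] at hint ⊢
  rw [Measure.volume_eq_prod] at hint ⊢
  rw [setIntegral_prod _ hint]
  simp_rw [hpc]
  simp

lemma inner_circle (g : ℂ → ℂ) (r : ℝ) (hg : DifferentiableOn ℂ g (Metric.ball 0 r))
    (z : ℂ) (ρ : ℝ) (hρ : 0 < ρ) (hρr : ρ < r) (hne : ρ ≠ ‖z‖) :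
    ∫ θ in Set.Ioo (-Real.pi) Real.pi,
      (ρ : ℂ) * (((starRingEnd ℂ) (ρ * Complex.exp (θ * I)) - (starRingEnd ℂ) z)⁻¹ *
        g (ρ * Complex.exp (θ * I))) =
    if ρ < ‖z‖ then -Real.pi * (g (ρ^2 / (starRingEnd ℂ) z) * (2 * ρ / (starRingEnd ℂ) z)) else 0 := by
  have hgd : DifferentiableOn ℂ g (Metric.closedBall 0 ρ) :=
    hg.mono (Metric.closedBall_subset_ball hρr)
  have hρ' : (ρ : ℂ) ≠ 0 := by exact_mod_cast hρ.ne'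
  have step : ∫ θ in Set.Ioo (-Real.pi) Real.pi,
      (ρ : ℂ) * (((starRingEnd ℂ) (ρ * Complex.exp (θ * I)) - (starRingEnd ℂ) z)⁻¹ *
        g (ρ * Complex.exp (θ * I))) =
      (ρ / I) * ∮ ζ in C(0, ρ), (ρ^2 - (starRingEnd ℂ) z * ζ)⁻¹ * g ζ := by
    rw [← integral_Ioc_eq_integral_Ioo, ← intervalIntegral.integral_of_le (by linarith [Real.pi_pos])]
    have hper : Function.Periodic (fun θ : ℝ => (ρ : ℂ) * (((starRingEnd ℂ) (ρ * Complex.exp (θ * I)) - (starRingEnd ℂ) z)⁻¹ *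
        g (ρ * Complex.exp (θ * I)))) (2 * Real.pi) := by
      intro θ
      have : Complex.exp ((θ + 2 * Real.pi : ℝ) * I) = Complex.exp (θ * I) := by
        push_cast
        rw [add_mul, Complex.exp_periodic]
      simp only [this]
    have h1 := hper.intervalIntegral_add_eq (-Real.pi) 0
    rw [show -Real.pi + 2 * Real.pi = Real.pi by ring, zero_add] at h1
    rw [h1, circleIntegral, ← intervalIntegral.integral_const_mul]
    congr 1
    ext θ
    have hconj : (starRingEnd ℂ) (ρ * Complex.exp (θ * I)) = ρ * (Complex.exp (θ * I))⁻¹ := by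
      rw [map_mul, Complex.conj_ofReal, ← Complex.exp_conj, ← Complex.exp_neg]
      simp
    rw [hconj]
    simp only [deriv_circleMap, circleMap, zero_add, smul_eq_mul]
    have he := Complex.exp_ne_zero (θ * I)
    have hd : (ρ:ℂ)^2 - (starRingEnd ℂ) z * (ρ * Complex.exp (θ * I)) =
      (ρ * (Complex.exp (θ * I))⁻¹ - (starRingEnd ℂ) z) * (ρ * Complex.exp (θ * I)) := by
      field_simp
    rw [hd, mul_inv]
    field_simp
  rw [step]
  have hzn : ‖(starRingEnd ℂ) z‖ = ‖z‖ := RCLike.norm_conj z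
  split_ifs with h
  · have hz0 : (starRingEnd ℂ) z ≠ 0 := by
      rw [← norm_ne_zero_iff, hzn]; linarith
    have hmem : (ρ:ℂ)^2 / (starRingEnd ℂ) z ∈ Metric.ball (0:ℂ) ρ := by
      rw [mem_ball_zero_iff, norm_div, hzn, norm_pow, Complex.norm_real, Real.norm_of_nonneg hρ.le,
        div_lt_iff₀ (by linarith)]
      nlinarith
    have hc := hgd.circleIntegral_sub_inv_smul hmem
    have : (∮ ζ in C(0, ρ), ((ρ:ℂ)^2 - (starRingEnd ℂ) z * ζ)⁻¹ * g ζ) =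
        (-((starRingEnd ℂ) z)⁻¹) * ∮ ζ in C(0, ρ), (ζ - (ρ:ℂ)^2 / (starRingEnd ℂ) z)⁻¹ • g ζ := by
      rw [← circleIntegral.integral_const_mul]
      congr 1
      ext ζ
      rw [show (ρ:ℂ)^2 - (starRingEnd ℂ) z * ζ = (-(starRingEnd ℂ) z) * (ζ - (ρ:ℂ)^2 / (starRingEnd ℂ) z) by
        field_simp; ring]
      rw [mul_inv, inv_neg, smul_eq_mul, mul_assoc]
    rw [this, hc, smul_eq_mul]
    field_simp
  · have hlt : ‖z‖ < ρ := lt_of_le_of_ne (not_lt.1 h) (Ne.symm hne)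
    have hnz : ∀ ζ ∈ Metric.closedBall (0:ℂ) ρ, (ρ:ℂ)^2 - (starRingEnd ℂ) z * ζ ≠ 0 := by
      intro ζ hζ h0
      rw [mem_closedBall_zero_iff] at hζ
      have := congrArg norm (sub_eq_zero.1 h0)
      rw [norm_mul, hzn, norm_pow, Complex.norm_real, Real.norm_of_nonneg hρ.le] at this
      nlinarith [norm_nonneg ζ, norm_nonneg z]
    have hd : DifferentiableOn ℂ (fun ζ => ((ρ:ℂ)^2 - (starRingEnd ℂ) z * ζ)⁻¹ * g ζ)
        (Metric.closedBall 0 ρ) := by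
      refine DifferentiableOn.mul (DifferentiableOn.inv (by fun_prop) hnz) hgd
    rw [(hd.mono Metric.closure_ball_subset_closedBall).diffContOnCl.circleIntegral_eq_zero hρ.le]
    simp

lemma disc_integral (g G : ℂ → ℂ) (r M : ℝ) (hgm : Measurable g)
    (hg : DifferentiableOn ℂ g (Metric.ball 0 r))
    (hM : ∀ u ∈ Metric.ball (0:ℂ) r, ‖g u‖ ≤ M)
    (hG : ∀ u ∈ Metric.ball (0:ℂ) r, HasDerivAt G (g u) u) (z : ℂ) (hz : z ∈ Metric.ball (0:ℂ) r) :
    ∫ u in Metric.ball (0:ℂ) r, ((starRingEnd ℂ) u - (starRingEnd ℂ) z)⁻¹ * g u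
      = -Real.pi * (G z - G 0) := by
  have hzr : ‖z‖ < r := mem_ball_zero_iff.1 hz
  have hM0 : 0 ≤ M := le_trans (norm_nonneg _) (hM z hz)
  set f : ℂ → ℂ := Set.indicator (Metric.ball (0:ℂ) r)
    (fun u => ((starRingEnd ℂ) u - (starRingEnd ℂ) z)⁻¹ * g u) with hf
  have hfm : Measurable f := by
    refine Measurable.indicator ?_ Metric.isOpen_ball.measurableSet
    refine Measurable.mul (Measurable.inv ?_) hgm
    exact (Complex.continuous_conj.measurable).sub measurable_const
  have hfi : Integrable f := by
    refine Integrable.mono' (((integrable_inv_norm (2 * r)).comp_sub_right z).const_mul M)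
      hfm.aestronglyMeasurable (Eventually.of_forall fun u => ?_)
    by_cases hu : u ∈ Metric.ball (0:ℂ) r
    · rw [hf, Set.indicator_of_mem hu, Set.indicator_of_mem, norm_mul, norm_inv, ← map_sub,
        RCLike.norm_conj, mul_comm]
      · exact mul_le_mul_of_nonneg_right (hM u hu) (by positivity)
      · rw [mem_closedBall_zero_iff]
        have := mem_ball_zero_iff.1 hu
        linarith [norm_sub_le u z]
    · rw [hf, Set.indicator_of_notMem hu, norm_zero]
      exact mul_nonneg hM0 (Set.indicator_nonneg (fun _ _ => by positivity) _)
  rw [← integral_indicator Metric.isOpen_ball.measurableSet, ← hf, integral_polar f hfm hfi]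
  have hae : ∀ᵐ ρ : ℝ, ρ ∈ Set.Ioi (0:ℝ) → (∫ θ in Set.Ioo (-Real.pi) Real.pi,
      (ρ : ℂ) * f (ρ * Complex.exp (θ * I))) = Set.indicator (Set.Ioc 0 ‖z‖) (fun ρ : ℝ =>
       -Real.pi * (g (ρ^2 / (starRingEnd ℂ) z) * (2 * ρ / (starRingEnd ℂ) z))) ρ := by
    have : ∀ᵐ ρ : ℝ, ρ ≠ ‖z‖ := by
      simp [ae_iff, measure_singleton]
    filter_upwards [this] with ρ hne hρ
    have hρ0 : 0 < ρ := hρ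
    have hnorm : ∀ θ : ℝ, ‖(ρ:ℂ) * Complex.exp (θ * I)‖ = ρ := by
      intro θ
      rw [norm_mul, Complex.norm_exp_ofReal_mul_I, mul_one, Complex.norm_real, Real.norm_of_nonneg hρ0.le]
    by_cases hr : ρ < r
    · have e : ∀ θ : ℝ, f (ρ * Complex.exp (θ * I)) =
          ((starRingEnd ℂ) (ρ * Complex.exp (θ * I)) - (starRingEnd ℂ) z)⁻¹ *
        g (ρ * Complex.exp (θ * I)) := by
        intro θ
        rw [hf, Set.indicator_of_mem]
        rw [mem_ball_zero_iff, hnorm]; exact hr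
      simp_rw [e]
      rw [inner_circle g r hg z ρ hρ0 hr hne]
      by_cases h : ρ < ‖z‖
      · rw [if_pos h, Set.indicator_of_mem (show ρ ∈ Set.Ioc 0 ‖z‖ from ⟨hρ0, h.le⟩)]
      · rw [if_neg h, Set.indicator_of_notMem]
        intro h'
        exact h (lt_of_le_of_ne h'.2 hne)
    · have e : ∀ θ : ℝ, f (ρ * Complex.exp (θ * I)) = 0 := by
        intro θ
        rw [hf, Set.indicator_of_notMem]
        rw [mem_ball_zero_iff, hnorm]; exact hr
      simp_rw [e]
      rw [Set.indicator_of_notMem (fun h' => hr (lt_of_le_of_lt h'.2 hzr))]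
      simp
  rw [setIntegral_congr_ae measurableSet_Ioi hae, setIntegral_indicator measurableSet_Ioc,
    Set.inter_eq_right.2 (fun x hx => hx.1), ← intervalIntegral.integral_of_le (norm_nonneg z),
    intervalIntegral.integral_const_mul]
  congr 1
  by_cases hz0 : z = 0
  · simp [hz0]
  have hzc : (starRingEnd ℂ) z ≠ 0 := by simpa using hz0
  have hzpos : 0 < ‖z‖ := norm_pos_iff.2 hz0
  have hmem : ∀ ρ ∈ Set.uIcc 0 ‖z‖, (ρ:ℂ)^2 / (starRingEnd ℂ) z ∈ Metric.ball (0:ℂ) r := by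
    intro ρ hρ
    rw [Set.uIcc_of_le hzpos.le] at hρ
    rw [mem_ball_zero_iff, norm_div, RCLike.norm_conj, norm_pow, Complex.norm_real,
      Real.norm_of_nonneg hρ.1, div_lt_iff₀ hzpos]
    nlinarith [hρ.1, hρ.2]
  have hft := intervalIntegral.integral_eq_sub_of_hasDerivAt (a := 0) (b := ‖z‖)
    (f := fun ρ : ℝ => G (ρ^2 / (starRingEnd ℂ) z))
    (f' := fun ρ : ℝ => g (ρ^2 / (starRingEnd ℂ) z) * (2 * ρ / (starRingEnd ℂ) z))
    (by
      intro ρ hρ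
      have h1 : HasDerivAt (fun ρ : ℂ => ρ^2 / (starRingEnd ℂ) z) (2 * ρ / (starRingEnd ℂ) z) (ρ:ℂ) := by
        have := ((hasDerivAt_id (ρ:ℂ)).pow 2).div_const ((starRingEnd ℂ) z)
        simpa using this
      exact ((hG _ (hmem ρ hρ)).comp (ρ:ℂ) h1).comp_ofReal)
    (by
      apply ContinuousOn.intervalIntegrable
      refine ContinuousOn.mul (hg.continuousOn.comp (by fun_prop) hmem) (by fun_prop))
  rw [hft]
  congr 2
  · rw [div_eq_iff hzc]
    rw [Complex.mul_conj, Complex.normSq_eq_norm_sq]; push_cast; rfl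
  · simp

lemma kernel_bound (Ω : Set ℂ) (w : ℂ) (hw : w ∉ closure Ω) :
    ∃ M : ℝ, 0 ≤ M ∧ ∀ ζ ∈ Ω, ‖((starRingEnd ℂ) ζ - (starRingEnd ℂ) w)⁻¹‖ ≤ M := by
  obtain ⟨δ, hδ, hb⟩ := Metric.mem_nhds_iff.1 (isClosed_closure.isOpen_compl.mem_nhds hw)
  refine ⟨δ⁻¹, by positivity, fun ζ hζ => ?_⟩
  rw [norm_inv, ← map_sub, RCLike.norm_conj]
  refine inv_anti₀ hδ ?_
  by_contra h
  exact hb (show ζ ∈ Metric.ball w δ by rw [Metric.mem_ball, dist_eq_norm]; linarith)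
    (subset_closure hζ)

lemma kernel_meas (w : ℂ) :
    Measurable (fun ζ : ℂ => ((starRingEnd ℂ) ζ - (starRingEnd ℂ) w)⁻¹) :=
  ((Complex.continuous_conj.measurable).sub measurable_const).inv

lemma cauchy_diff (A : Set ℂ) (hA : MeasurableSet A) (hAb : Bornology.IsBounded A)
    (w : ℂ) (hw : w ∉ closure A) (z : ℂ) (hz : z ∉ closure A) :
    DifferentiableAt ℂ
      (fun z => ∫ ζ in A, ((ζ - z) * ((starRingEnd ℂ) ζ - (starRingEnd ℂ) w))⁻¹) z := by
  obtain ⟨M, hM0, hM⟩ := kernel_bound A w hw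
  obtain ⟨δ, hδ, hb⟩ := Metric.mem_nhds_iff.1 (isClosed_closure.isOpen_compl.mem_nhds hz)
  have hfin : volume A ≠ ⊤ := hAb.measure_lt_top.ne
  have hdist : ∀ ζ ∈ A, ∀ x ∈ Metric.ball z (δ/2), δ/2 ≤ ‖ζ - x‖ := by
    intro ζ hζ x hx
    by_contra h
    refine hb (show ζ ∈ Metric.ball z δ from ?_) (subset_closure hζ)
    rw [Metric.mem_ball] at hx ⊢
    have := dist_triangle ζ x z
    rw [dist_eq_norm ζ x] at this
    linarith
  have hmeas : ∀ x : ℂ, Measurable (fun ζ : ℂ => ((ζ - x) * ((starRingEnd ℂ) ζ - (starRingEnd ℂ) w))⁻¹) := by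
    intro x
    exact ((measurable_id.sub measurable_const).mul
      ((Complex.continuous_conj.measurable).sub measurable_const)).inv
  have hzb : z ∈ Metric.ball z (δ/2) := Metric.mem_ball_self (by positivity)
  have := hasDerivAt_integral_of_dominated_loc_of_deriv_le (μ := volume.restrict A)
    (F := fun z ζ => ((ζ - z) * ((starRingEnd ℂ) ζ - (starRingEnd ℂ) w))⁻¹)
    (F' := fun z ζ => ((ζ - z)^2)⁻¹ * ((starRingEnd ℂ) ζ - (starRingEnd ℂ) w)⁻¹)
    (bound := fun _ => ((δ/2)^2)⁻¹ * M)
    (s := Metric.ball z (δ/2)) (x₀ := z) (Metric.ball_mem_nhds _ (by positivity))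
    (Eventually.of_forall fun x => (hmeas x).aestronglyMeasurable) ?_ ?_ ?_ ?_ ?_
  · exact this.2.differentiableAt
  · refine Measure.integrableOn_of_bounded hfin (hmeas z).aestronglyMeasurable (M := (δ/2)⁻¹ * M) ?_
    filter_upwards [ae_restrict_mem hA] with ζ hζ
    rw [mul_inv, norm_mul, norm_inv (ζ - z)]
    exact mul_le_mul (inv_anti₀ (by positivity) (hdist ζ hζ z hzb)) (hM ζ hζ) (norm_nonneg _) (by positivity)
  · exact (((measurable_id.sub measurable_const).pow_const 2).inv.mul (kernel_meas w)).aestronglyMeasurable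
  · filter_upwards [ae_restrict_mem hA] with ζ hζ x hx
    rw [norm_mul, norm_inv ((ζ - x)^2), norm_pow]
    exact mul_le_mul (inv_anti₀ (by positivity) (pow_le_pow_left₀ (by positivity) (hdist ζ hζ x hx) 2))
      (hM ζ hζ) (norm_nonneg _) (by positivity)
  · exact integrableOn_const hfin
  · filter_upwards [ae_restrict_mem hA] with ζ hζ x hx
    have hne : ζ - x ≠ 0 := by
      rw [← norm_pos_iff]
      have := hdist ζ hζ x hx
      linarith
    have h1 : HasDerivAt (fun x => (ζ - x)⁻¹) (((ζ - x)^2)⁻¹) x := by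
      have := ((hasDerivAt_id x).const_sub ζ).inv hne
      simpa [div_eq_mul_inv, Pi.inv_def] using this
    simp only [mul_inv]
    exact h1.mul_const _

lemma B2 (Ω : Set ℂ) (hΩopen : IsOpen Ω) (hΩbdd : Bornology.IsBounded Ω)
   (w : ℂ) (hw : w ∉ closure Ω) (z : ℂ) (hz : z ∉ closure Ω) :
   DifferentiableAt ℂ (fun z => doubleCauchy Ω z w) z :=
  (cauchy_diff Ω hΩopen.measurableSet hΩbdd w hw z hz).const_mul _

lemma B4 (Ω : Set ℂ) (hΩopen : IsOpen Ω) (hΩbdd : Bornology.IsBounded Ω)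
   (w : ℂ) (hw : w ∉ closure Ω) :
   Tendsto (fun z => doubleCauchy Ω z w) (Bornology.cobounded ℂ) (𝓝 0) := by
  obtain ⟨M, hM0, hM⟩ := kernel_bound Ω w hw
  obtain ⟨R, hR⟩ := hΩbdd.exists_norm_le
  have hfin : volume Ω ≠ ⊤ := hΩbdd.measure_lt_top.ne
  have : (Bornology.cobounded ℂ).IsCountablyGenerated := by
    rw [← comap_norm_atTop]; infer_instance
  have key : Tendsto (fun z => ∫ ζ in Ω, ((ζ - z) * ((starRingEnd ℂ) ζ - (starRingEnd ℂ) w))⁻¹)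
      (Bornology.cobounded ℂ) (𝓝 (∫ ζ in Ω, (0:ℂ))) := by
    refine tendsto_integral_filter_of_dominated_convergence (fun _ => M) ?_ ?_ ?_ ?_
    · refine Eventually.of_forall fun x => Measurable.aestronglyMeasurable ?_
      exact ((measurable_id.sub measurable_const).mul
        ((Complex.continuous_conj.measurable).sub measurable_const)).inv
    · filter_upwards [tendsto_norm_cobounded_atTop.eventually_ge_atTop (R + 1)] with z hz
      filter_upwards [ae_restrict_mem hΩopen.measurableSet] with ζ hζ
      rw [mul_inv, norm_mul, norm_inv (ζ - z)]
      have h1 : 1 ≤ ‖ζ - z‖ := by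
        have := norm_sub_norm_le z ζ
        rw [norm_sub_rev] at this
        linarith [hR ζ hζ]
      calc ‖ζ - z‖⁻¹ * _ ≤ 1 * M := mul_le_mul (inv_le_one_of_one_le₀ h1) (hM ζ hζ)
              (norm_nonneg _) zero_le_one
        _ = M := one_mul M
    · exact integrableOn_const hfin
    · refine Eventually.of_forall fun ζ => ?_
      simp only [mul_inv]
      have h1 : Tendsto (fun z : ℂ => (ζ - z)⁻¹) (Bornology.cobounded ℂ) (𝓝 0) :=
        tendsto_inv₀_cobounded.comp (by simpa using (tendsto_const_sub_cobounded ζ))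
      simpa using h1.mul_const _
  have := key.const_mul (-(1 / (Real.pi : ℂ)))
  simpa [doubleCauchy] using this

lemma B1 (Ω : Set ℂ) (hΩopen : IsOpen Ω) (hΩbdd : Bornology.IsBounded Ω)
   (hnull : volume (frontier Ω) = 0) (w : ℂ) (hw : w ∉ closure Ω) :
   Continuous (fun z => doubleCauchy Ω z w) := by
  obtain ⟨M, hM0, hM⟩ := kernel_bound Ω w hw
  obtain ⟨R, hR⟩ := hΩbdd.exists_norm_le
  set H : ℂ → ℂ := Set.indicator Ω (fun ζ => ((starRingEnd ℂ) ζ - (starRingEnd ℂ) w)⁻¹) with hH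
  have hHm : Measurable H := (kernel_meas w).indicator hΩopen.measurableSet
  have hform : (fun z => doubleCauchy Ω z w) = fun z => -(1 / (Real.pi : ℂ)) *
      ∫ u, u⁻¹ * H (u + z) := by
    ext z
    rw [doubleCauchy, ← integral_indicator hΩopen.measurableSet,
      ← integral_add_right_eq_self _ z]
    congr 2
    ext u
    by_cases h : u + z ∈ Ω
    · rw [Set.indicator_of_mem h, hH, Set.indicator_of_mem h, mul_inv]; simp
    · rw [Set.indicator_of_notMem h, hH, Set.indicator_of_notMem h, mul_zero]
  rw [hform]
  refine continuous_const.mul (continuous_iff_continuousAt.2 fun z₀ => ?_)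
  refine continuousAt_of_dominated (bound := fun u =>
    M * Set.indicator (Metric.closedBall (0:ℂ) (R + ‖z₀‖ + 1)) (fun u : ℂ => ‖u‖⁻¹) u) ?_ ?_ ?_ ?_
  · refine Eventually.of_forall fun z => Measurable.aestronglyMeasurable ?_
    exact measurable_inv.mul (hHm.comp (measurable_id.add measurable_const))
  · filter_upwards [Metric.ball_mem_nhds z₀ one_pos] with z hz
    refine Eventually.of_forall fun u => ?_
    by_cases h : u + z ∈ Ω
    · rw [hH, Set.indicator_of_mem h, Set.indicator_of_mem, norm_mul, norm_inv, mul_comm]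
      · exact mul_le_mul_of_nonneg_right (hM _ h) (by positivity)
      · rw [mem_closedBall_zero_iff]
        rw [Metric.mem_ball, dist_eq_norm] at hz
        have h1 := hR _ h
        have h2 : ‖u‖ ≤ ‖u + z‖ + ‖z‖ := by simpa using norm_sub_le (u + z) z
        have h3 : ‖z‖ ≤ ‖z - z₀‖ + ‖z₀‖ := by simpa using norm_add_le (z - z₀) z₀
        linarith
    · rw [hH, Set.indicator_of_notMem h, mul_zero, norm_zero]
      exact mul_nonneg hM0 (Set.indicator_nonneg (fun _ _ => by positivity) _)
  · exact (integrable_inv_norm _).const_mul M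
  · have hnull' : volume ((fun u => u + z₀) ⁻¹' (frontier Ω)) = 0 := by
      rw [measure_preimage_add_right, hnull]
    have hae : ∀ᵐ u : ℂ, u + z₀ ∉ frontier Ω := by
      rw [ae_iff]; simp only [not_not]; exact hnull'
    filter_upwards [hae] with u hu
    refine continuousAt_const.mul ?_
    have hHc : ContinuousAt H (u + z₀) := by
      by_cases h : u + z₀ ∈ Ω
      · have hne : (starRingEnd ℂ) (u + z₀) - (starRingEnd ℂ) w ≠ 0 := by
          intro h0
          have : u + z₀ = w := (starRingEnd ℂ).injective (sub_eq_zero.1 h0)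
          exact hw (this ▸ subset_closure h)
        have hc : ContinuousAt (fun ζ => ((starRingEnd ℂ) ζ - (starRingEnd ℂ) w)⁻¹) (u + z₀) :=
          (Complex.continuous_conj.continuousAt.sub continuousAt_const).inv₀ hne
        refine hc.congr ?_
        filter_upwards [hΩopen.mem_nhds h] with x hx
        rw [hH, Set.indicator_of_mem hx]
      · have h' : u + z₀ ∉ closure Ω := fun hc => hu (by
          rw [hΩopen.frontier_eq]; exact ⟨hc, h⟩)
        refine (continuousAt_const (y := (0:ℂ))).congr ?_
        filter_upwards [isClosed_closure.isOpen_compl.mem_nhds h'] with x hx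
        rw [hH, Set.indicator_of_notMem (fun h => hx (subset_closure h))]
    exact ContinuousAt.comp (f := fun z => u + z) hHc (by fun_prop)

lemma integrableOn_kernel (A : Set ℂ) (hA : MeasurableSet A) (hAb : Bornology.IsBounded A)
    (w : ℂ) (hw : w ∉ closure A) (z : ℂ) :
    IntegrableOn (fun ζ => ((ζ - z) * ((starRingEnd ℂ) ζ - (starRingEnd ℂ) w))⁻¹) A := by
  obtain ⟨M, hM0, hM⟩ := kernel_bound A w hw
  obtain ⟨R, hR⟩ := hAb.exists_norm_le
  refine Integrable.mono' (((integrable_inv_norm (R + ‖z‖)).comp_sub_right z).const_mul M).integrableOn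
    (Measurable.aestronglyMeasurable ?_) ?_
  · exact ((measurable_id.sub measurable_const).mul
        ((Complex.continuous_conj.measurable).sub measurable_const)).inv
  · filter_upwards [ae_restrict_mem hA] with ζ hζ
    rw [Set.indicator_of_mem, mul_inv, norm_mul, norm_inv (ζ - z), mul_comm]
    · exact mul_le_mul_of_nonneg_right (hM _ hζ) (by positivity)
    · rw [mem_closedBall_zero_iff]
      linarith [norm_sub_le ζ z, hR ζ hζ]

lemma disc_kernel (a w : ℂ) (r : ℝ) (hw : w ∉ closure (Metric.ball a r)) (hwa : r ≤ dist w a)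
    (z : ℂ) (hz : z ∈ Metric.ball a r) :
    -(1 / (Real.pi : ℂ)) * ∫ ζ in Metric.ball a r,
      ((ζ - z) * ((starRingEnd ℂ) ζ - (starRingEnd ℂ) w))⁻¹ =
      (starRingEnd ℂ) (Complex.log ((z - w) / (a - w))) := by
  obtain ⟨M, hM0, hM⟩ := kernel_bound _ w hw
  have hr : 0 < r := Metric.pos_of_mem_ball hz
  have haw : a - w ≠ 0 := by
    rw [← norm_pos_iff, ← dist_eq_norm, dist_comm]; linarith
  have hball : ∀ u ∈ Metric.ball (0:ℂ) r, u + a ∈ Metric.ball a r := by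
    intro u hu
    rw [mem_ball_zero_iff] at hu
    rw [Metric.mem_ball, dist_eq_norm]; simpa using hu
  have hne : ∀ u ∈ Metric.ball (0:ℂ) r, u + a - w ≠ 0 := by
    intro u hu h
    refine hw (subset_closure ?_)
    rw [← sub_eq_zero.1 h]
    exact hball u hu
  have hslit : ∀ u ∈ Metric.ball (0:ℂ) r, (u + a - w) / (a - w) ∈ slitPlane := by
    intro u hu
    refine Complex.ball_one_subset_slitPlane ?_
    rw [Metric.mem_ball, dist_eq_norm]
    have : (u + a - w) / (a - w) - 1 = u / (a - w) := by field_simp; ring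
    rw [this, norm_div, div_lt_one (norm_pos_iff.2 haw)]
    rw [mem_ball_zero_iff] at hu
    rw [dist_comm, dist_eq_norm] at hwa
    linarith
  have hd := disc_integral (fun u => (u + a - w)⁻¹) (fun u => Complex.log ((u + a - w) / (a - w)))
    r M (by fun_prop)
    (by
      intro u hu
      have h1 : DifferentiableAt ℂ (fun u => u + a - w) u := by fun_prop
      exact (h1.inv (hne u hu)).differentiableWithinAt)
    (by
      intro u hu
      have := hM _ (hball u hu)
      rwa [norm_inv, ← map_sub, RCLike.norm_conj, ← norm_inv] at this)
    (by
      intro u hu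
      have h1 : HasDerivAt (fun u => (u + a - w) / (a - w)) (1 / (a - w)) u :=
        (((hasDerivAt_id u).add_const a).sub_const w).div_const _
      have := h1.clog (hslit u hu)
      convert this using 1
      have := hne u hu
      field_simp)
    (z - a) (by rw [mem_ball_zero_iff, ← dist_eq_norm]; exact hz)
  have hsh : ∫ ζ in Metric.ball a r,
      ((ζ - z) * ((starRingEnd ℂ) ζ - (starRingEnd ℂ) w))⁻¹ =
      (starRingEnd ℂ) (∫ u in Metric.ball (0:ℂ) r,
        ((starRingEnd ℂ) u - (starRingEnd ℂ) (z - a))⁻¹ * (u + a - w)⁻¹) := by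
    rw [← integral_conj, ← integral_indicator Metric.isOpen_ball.measurableSet,
      ← integral_indicator Metric.isOpen_ball.measurableSet, ← integral_add_right_eq_self _ a]
    congr 1
    ext u
    by_cases hu : u ∈ Metric.ball (0:ℂ) r
    · rw [Set.indicator_of_mem hu, Set.indicator_of_mem (hball u hu), mul_inv]
      simp only [map_mul, map_inv₀, map_sub, map_add, Complex.conj_conj]
      ring_nf
    · rw [Set.indicator_of_notMem hu, Set.indicator_of_notMem]
      intro h
      refine hu ?_
      rw [Metric.mem_ball, dist_eq_norm] at h
      rw [mem_ball_zero_iff]; simpa using h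
  rw [hsh, hd]
  have hpi : (Real.pi : ℂ) ≠ 0 := by exact_mod_cast Real.pi_ne_zero
  simp only [map_mul, map_neg, map_sub, Complex.conj_ofReal, zero_add, sub_add_cancel,
    div_self haw, Complex.log_one, map_zero, sub_zero]
  field_simp

lemma B3 (Ω : Set ℂ) (hΩopen : IsOpen Ω) (hΩbdd : Bornology.IsBounded Ω)
   (w : ℂ) (hw : w ∉ closure Ω) (z : ℂ) (hz : z ∈ Ω) :
   DifferentiableAt ℂ (fun z => expTransform Ω z w / ((starRingEnd ℂ) z - (starRingEnd ℂ) w)) z := by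
  obtain ⟨r, hr, hb⟩ := Metric.mem_nhds_iff.1 (hΩopen.mem_nhds hz)
  set B := Metric.ball z r with hB
  have hBm : MeasurableSet B := Metric.isOpen_ball.measurableSet
  have hwB : w ∉ closure B := fun h => hw (closure_mono hb h)
  have hwa : r ≤ dist w z := by
    by_contra h
    exact hw (subset_closure (hb (show w ∈ B from not_le.1 h)))
  have hsub : Ω \ B ⊆ Ω := Set.sdiff_subset
  have hwD : w ∉ closure (Ω \ B) := fun h => hw (closure_mono hsub h)
  have hzD : z ∉ closure (Ω \ B) := by
    intro h
    have hcl : closure (Ω \ B) ⊆ Bᶜ := closure_minimal (fun x hx => hx.2)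
      Metric.isOpen_ball.isClosed_compl
    exact hcl h (Metric.mem_ball_self hr)
  have hDm : MeasurableSet (Ω \ B) := hΩopen.measurableSet.diff hBm
  have hd := cauchy_diff (Ω \ B) hDm (hΩbdd.subset hsub) w hwD z hzD
  have hd2 : DifferentiableAt ℂ (fun x => Complex.exp (-(1 / (Real.pi : ℂ)) *
      ∫ ζ in Ω \ B, ((ζ - x) * ((starRingEnd ℂ) ζ - (starRingEnd ℂ) w))⁻¹) /
      ((starRingEnd ℂ) (z - w))) z := ((hd.const_mul _).cexp).div_const _
  refine hd2.congr_of_eventuallyEq ?_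
  filter_upwards [Metric.ball_mem_nhds z hr] with x hx
  have hxw : x - w ≠ 0 := by
    intro h
    exact hw (subset_closure (hb (sub_eq_zero.1 h ▸ hx)))
  have hzw : z - w ≠ 0 := by
    intro h
    exact hw (subset_closure (sub_eq_zero.1 h ▸ hz))
  have hsplit := integral_inter_add_sdiff hBm
    (integrableOn_kernel Ω hΩopen.measurableSet hΩbdd w hw x)
  have hxc : (starRingEnd ℂ) x - (starRingEnd ℂ) w ≠ 0 := by
    rw [← map_sub]; exact (map_ne_zero (starRingEnd ℂ)).2 hxw
  have hzc : (starRingEnd ℂ) z - (starRingEnd ℂ) w ≠ 0 := by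
    rw [← map_sub]; exact (map_ne_zero (starRingEnd ℂ)).2 hzw
  rw [expTransform, doubleCauchy, ← hsplit, Set.inter_eq_right.2 hb, mul_add, Complex.exp_add,
    disc_kernel z w r hwB hwa x hx, Complex.exp_conj, Complex.exp_log (div_ne_zero hxw hzw)]
  simp only [map_div₀, map_sub]
  field_simp

lemma frontier_null (γ : ℝ → ℂ) (hγan : ∀ t, AnalyticAt ℝ γ t) :
   volume (Set.range γ) = 0 := by
  have : Set.range γ = (fun z : ℂ => γ z.re) '' Set.univ := by
    ext x; constructor
    · rintro ⟨t, rfl⟩; exact ⟨t, trivial, by simp⟩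
    · rintro ⟨t, -, rfl⟩; exact ⟨t.re, rfl⟩
  rw [this]
  refine addHaar_image_eq_zero_of_det_fderivWithin_eq_zero volume (f' := fun z =>
    (fderiv ℝ γ z.re).comp reCLM) ?_ ?_
  · intro z _
    exact ((hγan z.re).differentiableAt.hasFDerivAt.comp z reCLM.hasFDerivAt).hasFDerivWithinAt
  · intro z _
    by_contra h
    have hk : Function.Injective ((fderiv ℝ γ z.re).comp reCLM) := by
      have := ContinuousLinearMap.toContinuousLinearEquivOfDetNeZero
        ((fderiv ℝ γ z.re).comp reCLM) h
      have e : ⇑((fderiv ℝ γ z.re).comp reCLM) =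
        ⇑(ContinuousLinearMap.toContinuousLinearEquivOfDetNeZero
        ((fderiv ℝ γ z.re).comp reCLM) h) := rfl
      rw [e]
      exact ContinuousLinearEquiv.injective _
    have := @hk I 0 (by simp)
    simp at this

lemma expT_ne (Ω : Set ℂ) (z w : ℂ) : expTransform Ω z w ≠ 0 := Complex.exp_ne_zero _

/-- For `w` outside `closure Ω`, the pair `(G(·,w), F(·,w))` built from the
exponential transform is the unique holomorphic section of the line bundle with transition
function `1/(S(z) − conj w)` which takes the value one at infinity. -/
theorem exponential_transform_section_exterior
    (Ω : Set ℂ) (hΩopen : IsOpen Ω) (hΩbdd : Bornology.IsBounded Ω)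
    (hΩconn : IsConnected Ω) (hΩsc : SimplyConnectedSpace Ω)
    (γ : ℝ → ℂ) (hγan : ∀ t, AnalyticAt ℝ γ t)
    (hγper : Function.Periodic γ (2 * Real.pi))
    (hγ' : ∀ t, deriv γ t ≠ 0)
    (hΓ : frontier Ω = Set.range γ)
    (hwind : ∀ z ∈ Ω,
      (1 / (2 * Real.pi * Complex.I)) *
        (∫ t in (0:ℝ)..(2 * Real.pi), deriv γ t / (γ t - z)) = 1)
    (U : Set ℂ) (hU : IsOpen U) (hΓU : frontier Ω ⊆ U)
    (S : ℂ → ℂ) (hS : DifferentiableOn ℂ S U)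
    (hSval : ∀ z ∈ frontier Ω, S z = (starRingEnd ℂ) z)
    (w : ℂ) (hw : w ∉ closure Ω) :
    ∃ (V : Set ℂ) (f₁ f₂ : ℂ → ℂ), IsOpen V ∧ V ⊆ U ∧ frontier Ω ⊆ V ∧
      DifferentiableOn ℂ f₁ (Ω ∪ V) ∧
      DifferentiableOn ℂ f₂ ((closure Ω)ᶜ ∪ V) ∧
      (∀ z ∈ V, f₁ z * (S z - (starRingEnd ℂ) w) = f₂ z) ∧
      Tendsto f₂ (Bornology.cobounded ℂ) (𝓝 1) ∧
      (∀ z ∉ closure Ω, f₂ z = expTransform Ω z w) ∧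
      (∀ z ∈ Ω, f₁ z = expTransform Ω z w / ((starRingEnd ℂ) z - (starRingEnd ℂ) w)) ∧
      (∀ (V' : Set ℂ) (g₁ g₂ : ℂ → ℂ), IsOpen V' → V' ⊆ U → frontier Ω ⊆ V' →
        DifferentiableOn ℂ g₁ (Ω ∪ V') →
        DifferentiableOn ℂ g₂ ((closure Ω)ᶜ ∪ V') →
        (∀ z ∈ V', g₁ z * (S z - (starRingEnd ℂ) w) = g₂ z) →
        Tendsto g₂ (Bornology.cobounded ℂ) (𝓝 1) →
        (∀ z ∈ Ω, g₁ z = f₁ z) ∧ (∀ z ∈ (closure Ω)ᶜ, g₂ z = f₂ z)) := by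
  have hnull : volume (frontier Ω) = 0 := by rw [hΓ]; exact frontier_null γ hγan
  have hCc := B1 Ω hΩopen hΩbdd hnull w hw
  have hEc : Continuous (fun z => expTransform Ω z w) := Complex.continuous_exp.comp hCc
  have hEd : ∀ z ∉ closure Ω, DifferentiableAt ℂ (fun z => expTransform Ω z w) z := fun z hz =>
    (B2 Ω hΩopen hΩbdd w hw z hz).cexp
  have hG := B3 Ω hΩopen hΩbdd w hw
  have hEt : Tendsto (fun z => expTransform Ω z w) (Bornology.cobounded ℂ) (𝓝 1) := by
    have := (Complex.continuous_exp.tendsto 0).comp (B4 Ω hΩopen hΩbdd w hw)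
    simpa [Function.comp_def, expTransform] using this
  have hne : ∀ z ∈ closure Ω, (starRingEnd ℂ) z - (starRingEnd ℂ) w ≠ 0 := by
    intro z hz h
    have : z = w := (starRingEnd ℂ).injective (sub_eq_zero.1 h)
    exact hw (this ▸ hz)
  have hfr : ∀ z ∈ frontier Ω, z ∉ Ω := fun z hz h => by
    rw [hΩopen.frontier_eq] at hz; exact hz.2 h
  classical
  set V : Set ℂ := U ∩ S ⁻¹' {(starRingEnd ℂ) w}ᶜ with hVdef
  have hV : IsOpen V := hS.continuousOn.isOpen_inter_preimage hU isOpen_compl_singleton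
  have hVU : V ⊆ U := Set.inter_subset_left
  have hVS : ∀ z ∈ V, S z - (starRingEnd ℂ) w ≠ 0 := fun z hz => sub_ne_zero.2 hz.2
  have hΓV : frontier Ω ⊆ V := fun z hz => ⟨hΓU hz, by
    have := hne z (frontier_subset_closure hz)
    simp only [Set.mem_preimage, Set.mem_compl_iff, Set.mem_singleton_iff, hSval z hz]
    exact sub_ne_zero.1 this⟩
  let f₁ : ℂ → ℂ := fun z => if z ∈ Ω then
      expTransform Ω z w / ((starRingEnd ℂ) z - (starRingEnd ℂ) w)
    else expTransform Ω z w / (S z - (starRingEnd ℂ) w)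
  let f₂ : ℂ → ℂ := fun z => if z ∈ Ω then
      expTransform Ω z w / ((starRingEnd ℂ) z - (starRingEnd ℂ) w) * (S z - (starRingEnd ℂ) w)
    else expTransform Ω z w
  have h12 : ∀ z ∈ V, f₁ z * (S z - (starRingEnd ℂ) w) = f₂ z := by
    intro z hz
    by_cases h : z ∈ Ω
    · simp only [f₁, f₂, h, if_true]
    · simp only [f₁, f₂, h, if_false]
      exact div_mul_cancel₀ _ (hVS z hz)
  have hf1Ω : ∀ z ∈ Ω, DifferentiableAt ℂ f₁ z := by
    intro z hz
    refine (hG z hz).congr_of_eventuallyEq ?_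
    filter_upwards [hΩopen.mem_nhds hz] with x hx
    simp only [f₁, hx, if_true]
  have hf2ext : ∀ z ∉ closure Ω, f₂ z = expTransform Ω z w := by
    intro z hz
    simp only [f₂, show z ∉ Ω from fun h => hz (subset_closure h), if_false]
  have hf2d : ∀ z ∉ closure Ω, DifferentiableAt ℂ f₂ z := by
    intro z hz
    refine (hEd z hz).congr_of_eventuallyEq ?_
    filter_upwards [isClosed_closure.isOpen_compl.mem_nhds hz] with x hx using hf2ext x hx
  have hSd : ∀ z ∈ V, DifferentiableAt ℂ (fun z => S z - (starRingEnd ℂ) w) z := fun z hz =>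
    (hS.differentiableAt (hU.mem_nhds (hVU hz))).sub_const _
  have hf2V : DifferentiableOn ℂ f₂ V := by
    refine removable_schwarz f₂ S (frontier Ω) U V hU hS hSval hV hVU ?_ ?_
    · refine ContinuousOn.if ?_ ?_ ?_
      · intro z hz
        have hz2 : z ∈ frontier Ω := hz.2
        rw [hSval z hz2]
        exact div_mul_cancel₀ _ (hne z (frontier_subset_closure hz2))
      · refine ContinuousOn.mul (ContinuousOn.div hEc.continuousOn ?_ ?_) ?_
        · exact ((Complex.continuous_conj).sub continuous_const).continuousOn
        · intro z hz; exact hne z hz.2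
        · exact (hS.continuousOn.mono (fun z hz => hVU hz.1)).sub continuousOn_const
      · exact hEc.continuousOn
    · intro z hz hzf
      by_cases h : z ∈ Ω
      · refine ((hf1Ω z h).mul (hSd z hz)).congr_of_eventuallyEq ?_
        filter_upwards [hV.mem_nhds hz] with x hx using (h12 x hx).symm
      · refine hf2d z fun h' => hzf ?_
        rw [hΩopen.frontier_eq]; exact ⟨h', h⟩
  have hf1V : ∀ z ∈ V, DifferentiableAt ℂ f₁ z := by
    intro z hz
    refine ((hf2V.differentiableAt (hV.mem_nhds hz)).div (hSd z hz) (hVS z hz)).congr_of_eventuallyEq ?_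
    filter_upwards [hV.mem_nhds hz] with x hx
    simp only [Pi.div_apply]
    rw [← h12 x hx, mul_div_cancel_right₀ _ (hVS x hx)]
  have hf1ne : ∀ z ∈ Ω ∪ V, f₁ z ≠ 0 := by
    intro z hz
    by_cases h : z ∈ Ω
    · simp only [f₁, h, if_true]
      exact div_ne_zero (expT_ne _ _ _) (hne z (subset_closure h))
    · simp only [f₁, h, if_false]
      exact div_ne_zero (expT_ne _ _ _) (hVS z (hz.resolve_left h))
  have hf2t : Tendsto f₂ (Bornology.cobounded ℂ) (𝓝 1) := by
    refine hEt.congr' ?_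
    filter_upwards [Bornology.isBounded_def.1 hΩbdd] with z hz
    simp only [f₂, show z ∉ Ω from hz, if_false]
  refine ⟨V, f₁, f₂, hV, hVU, hΓV, ?_, ?_, h12, hf2t, hf2ext, ?_, ?_⟩
  · rintro z (hz | hz)
    · exact (hf1Ω z hz).differentiableWithinAt
    · exact (hf1V z hz).differentiableWithinAt
  · rintro z (hz | hz)
    · exact (hf2d z hz).differentiableWithinAt
    · exact (hf2V.differentiableAt (hV.mem_nhds hz)).differentiableWithinAt
  · intro z hz; simp only [f₁, hz, if_true]
  · intro V' g₁ g₂ hV' hV'U hΓV' hg₁ hg₂ hg12 hgt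
    let h : ℂ → ℂ := fun z => if z ∈ Ω then g₁ z / f₁ z else g₂ z / f₂ z
    have hW : IsOpen (V ∩ V') := hV.inter hV'
    have hVeq : ∀ z ∈ V ∩ V', h z = g₁ z / f₁ z := by
      intro z hz
      by_cases hzΩ : z ∈ Ω
      · simp only [h, hzΩ, if_true]
      · simp only [h, hzΩ, if_false]
        rw [← h12 z hz.1, ← hg12 z hz.2]
        exact mul_div_mul_right _ _ (hVS z hz.1)
    have hhd : Differentiable ℂ h := by
      intro z
      have hg1d : ∀ z ∈ Ω ∪ V', DifferentiableAt ℂ g₁ z := fun z hz =>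
        hg₁.differentiableAt ((hΩopen.union hV').mem_nhds hz)
      by_cases hz : z ∈ Ω
      · refine ((hg1d z (Or.inl hz)).div (hf1Ω z hz) (hf1ne z (Or.inl hz))).congr_of_eventuallyEq ?_
        filter_upwards [hΩopen.mem_nhds hz] with x hx
        simp only [h, hx, if_true, Pi.div_apply]
      by_cases hz2 : z ∈ closure Ω
      · have hzf : z ∈ frontier Ω := by rw [hΩopen.frontier_eq]; exact ⟨hz2, hz⟩
        have hzV := hΓV hzf
        have hzV' := hΓV' hzf
        refine ((hg1d z (Or.inr hzV')).div (hf1V z hzV) (hf1ne z (Or.inr hzV))).congr_of_eventuallyEq ?_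
        filter_upwards [hW.mem_nhds ⟨hzV, hzV'⟩] with x hx
        exact hVeq x hx
      · have hg2d : DifferentiableAt ℂ g₂ z := hg₂.differentiableAt
          ((isClosed_closure.isOpen_compl.union hV').mem_nhds (Or.inl hz2))
        refine (hg2d.div (hf2d z hz2) (by rw [hf2ext z hz2]; exact expT_ne _ _ _)).congr_of_eventuallyEq ?_
        filter_upwards [isClosed_closure.isOpen_compl.mem_nhds hz2] with x hx
        simp only [h, show x ∉ Ω from fun h => hx (subset_closure h), if_false, Pi.div_apply]
    have hht : Tendsto h (Bornology.cobounded ℂ) (𝓝 1) := by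
      have := hgt.div hf2t one_ne_zero
      rw [div_one] at this
      refine this.congr' ?_
      filter_upwards [Bornology.isBounded_def.1 hΩbdd] with z hz
      simp only [h, show z ∉ Ω from hz, if_false, Pi.div_apply]
    have hconst : ∀ z, h z = 1 := by
      intro z
      refine hhd.apply_eq_of_tendsto_cocompact z ?_
      rwa [← Metric.cobounded_eq_cocompact]
    constructor
    · intro z hz
      have := hconst z
      simp only [h, hz, if_true] at this
      exact (div_eq_one_iff_eq (hf1ne z (Or.inl hz))).1 this
    · intro z hz
      have := hconst z
      simp only [h, show z ∉ Ω from fun h => hz (subset_closure h), if_false] at this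
      exact (div_eq_one_iff_eq (by rw [hf2ext z hz]; exact expT_ne _ _ _)).1 this
end

section
/- Suppose Ω is a quadrature domain in the sense that its Schwarz function extends meromorphically to Ω: there are finitely many distinct points a_1, …, a_n ∈ Ω, an open neighborhood V of Γ, and a holomorphic function S on (Ω \ {a_1, …, a_n}) ∪ V with S(z) = conj(z) for all z ∈ Γ. Then for every function f holomorphic on an open set containing closure(Ω) and every ε > 0 small enough that the closed disks of radius ε around the a_j are pairwise disjoint and contained in Ω \ V: (1/π) ∫_Ω f dA = Σ_{j=1}^n (1/(2πi)) ∮_{|z−a_j|=ε} f(z)·S(z) dz, where ∮_{|z−a_j|=ε} denotes the integral over the positively oriented circle of radius ε centered at a_j. -/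
open Complex MeasureTheory Filter Topology Bornology

lemma qd_crossing (U : Set ℂ) (x y : ℂ) (hx : x ∈ U) (hy : y ∉ U) :
    ∃ w ∈ segment ℝ x y, w ∈ frontier U := by
  by_contra h
  push Not at h
  have hc : IsPreconnected (segment ℝ x y) := (convex_segment x y).isPreconnected
  have hcov : ∀ w ∈ segment ℝ x y, w ∈ interior U ∨ w ∈ (closure U)ᶜ := by
    intro w hw
    by_contra hcon
    push Not at hcon
    exact h w hw ⟨by simpa using hcon.2, hcon.1⟩
  have hxi : x ∈ interior U := by
    refine (hcov x (left_mem_segment ℝ x y)).resolve_right fun hh => hh (subset_closure hx)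
  have hyi : y ∈ (closure U)ᶜ := by
    refine (hcov y (right_mem_segment ℝ x y)).resolve_left fun hh => hy (interior_subset hh)
  obtain ⟨w, -, hw1, hw2⟩ := hc _ _ isOpen_interior isClosed_closure.isOpen_compl hcov
    ⟨x, left_mem_segment ℝ x y, hxi⟩ ⟨y, right_mem_segment ℝ x y, hyi⟩
  exact hw2 (subset_closure (interior_subset hw1))

lemma qd_lip_indicator (U s : Set ℂ) (hs : Convex ℝ s) (F : ℂ → ℂ) (K : NNReal)
    (hF : LipschitzOnWith K F (s ∩ closure U)) (h0 : ∀ z ∈ frontier U, F z = 0) :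
    LipschitzOnWith K (U.indicator F) s := by
  have key : ∀ x ∈ s, ∀ y ∈ s, x ∈ U → y ∉ U → ‖F x‖ ≤ K * ‖x - y‖ := by
    intro x hx y hy hxU hyU
    obtain ⟨w, hw, hwf⟩ := qd_crossing U x y hxU hyU
    have h1 := hF.norm_sub_le ⟨hx, subset_closure hxU⟩
      ⟨hs.segment_subset hx hy hw, frontier_subset_closure hwf⟩
    rw [h0 w hwf, sub_zero] at h1
    refine h1.trans (mul_le_mul_of_nonneg_left ?_ K.2)
    have := mem_segment_iff_wbtw.1 hw
    have h3 := this.dist_add_dist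
    rw [dist_eq_norm, dist_eq_norm, dist_eq_norm] at h3
    linarith [norm_nonneg (w - y)]
  refine LipschitzOnWith.of_dist_le_mul fun x hx y hy => ?_
  rw [dist_eq_norm, dist_eq_norm]
  by_cases hxU : x ∈ U <;> by_cases hyU : y ∈ U
  · simpa [hxU, hyU] using hF.norm_sub_le ⟨hx, subset_closure hxU⟩ ⟨hy, subset_closure hyU⟩
  · simpa [hxU, hyU] using key x hx y hy hxU hyU
  · simpa [hxU, hyU, norm_sub_rev] using key y hy x hx hyU hxU
  · simp [hxU, hyU]; positivity

lemma qd_lip_global (U : Set ℂ) (hU : IsBounded U) (F : ℂ → ℂ)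
    (hF : ∀ z ∈ closure U, ContDiffAt ℝ 1 F z) (h0 : ∀ z ∈ frontier U, F z = 0) :
    ∃ K, LipschitzWith K (U.indicator F) := by
  have h1 : LocallyLipschitzOn (closure U) (U.indicator F) := by
    intro p hp
    obtain ⟨K, t, ht, hK⟩ := (hF p hp).exists_lipschitzOnWith
    obtain ⟨r, hr, hrt⟩ := Metric.mem_nhds_iff.1 ht
    refine ⟨K, Metric.ball p r, mem_nhdsWithin_of_mem_nhds (Metric.ball_mem_nhds p hr), ?_⟩
    exact qd_lip_indicator U _ (convex_ball p r) F K
      (hK.mono (Set.inter_subset_left.trans hrt)) h0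
  obtain ⟨K, hK⟩ := h1.exists_lipschitzOnWith_of_compact hU.isCompact_closure
  refine ⟨K, ?_⟩
  have := qd_lip_indicator U Set.univ convex_univ (U.indicator F) K (by simpa using hK)
    (by intro z hz; by_cases h : z ∈ U <;> simp [h, h0 z hz])
  rw [Set.indicator_indicator, Set.inter_self] at this
  exact lipschitzOnWith_univ.1 this

lemma qd_stokes (G L : ℂ → ℂ) (K : NNReal) (hG : LipschitzWith K G) (hc : HasCompactSupport G)
    (v : ℂ) (hL : ∀ᵐ x, HasLineDerivAt ℝ G (L x) x v) (hi : Integrable L) :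
    ∫ x, L x = 0 := by
  have key : ∀ A : ℂ →L[ℝ] ℝ, ∫ x, A (L x) = 0 := by
    intro A
    have hl : LipschitzWith (‖A‖₊ * K) (A ∘ G) := A.lipschitz.comp hG
    have h := LipschitzWith.integral_lineDeriv_mul_eq (μ := (volume : Measure ℂ))
      (LipschitzWith.const (1:ℝ)) hl (hc.comp_left (map_zero A)) (-v)
    simp only [neg_neg, mul_one] at h
    rw [show (∫ x, A (L x)) = ∫ x, lineDeriv ℝ (A ∘ G) x v from ?_, ← h]
    · have : ∀ x : ℂ, lineDeriv ℝ (fun _ : ℂ => (1:ℝ)) x (-v) = 0 := by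
        intro x; simp [lineDeriv]
      simp [this]
    · refine integral_congr_ae ?_
      filter_upwards [hL] with x hx
      have : HasLineDerivAt ℝ (A ∘ G) (A (L x)) x v := by
        have := A.hasFDerivAt.comp_hasDerivAt (0:ℝ) hx
        exact this
      exact this.lineDeriv.symm
  apply Complex.ext
  · have := key reCLM
    rw [ContinuousLinearMap.integral_comp_comm _ hi] at this
    simpa using this
  · have := key imCLM
    rw [ContinuousLinearMap.integral_comp_comm _ hi] at this
    simpa using this

lemma qd_null (γ : ℝ → ℂ) (hγ : ∀ t, AnalyticAt ℝ γ t) : volume (Set.range γ) = 0 := by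
  have h1 : ContDiff ℝ 1 γ := contDiff_iff_contDiffAt.2 fun t => (hγ t).contDiffAt
  have h2 := h1.dimH_range_le
  have h3 : dimH (Set.range γ) < (2 : NNReal) := lt_of_le_of_lt h2 (by simp)
  refine measure_zero_of_dimH_lt (d := 2) ?_ h3
  have : ((2 : NNReal) : ℝ) = Module.finrank ℝ ℂ := by simp
  rw [this]
  exact Measure.absolutelyContinuous_isAddHaarMeasure _ _

/-- kernel -/
noncomputable def qdK (ψ : ℝ → ℝ) (h : ℂ → ℂ) (a : ℂ) (z : ℂ) : ℂ :=
  h z * ((2 * deriv ψ (normSq (z - a)) : ℝ) * (z - a))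

lemma qdK_zero_out (ψ : ℝ → ℝ) (h : ℂ → ℂ) (a : ℂ) (ε : ℝ) (hε : 0 < ε)
    (h0 : ∀ s, ε ^ 2 / 2 < s → deriv ψ s = 0) (z : ℂ) (hz : z ∉ Metric.ball a ε) :
    qdK ψ h a z = 0 := by
  have : ε ^ 2 / 2 < normSq (z - a) := by
    rw [normSq_eq_norm_sq]
    rw [Metric.mem_ball, dist_eq_norm, not_lt] at hz
    nlinarith
  simp [qdK, h0 _ this]

lemma qdK_continuous (ψ : ℝ → ℝ) (hψ : ContDiff ℝ 1 ψ) (h : ℂ → ℂ) (a : ℂ) (ε : ℝ) (hε : 0 < ε)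
    (h0 : ∀ s, ε ^ 2 / 2 < s → deriv ψ s = 0) (h1 : ∀ s, s < ε ^ 2 / 4 → deriv ψ s = 0)
    (hh : ∀ z ∈ Metric.closedBall a ε, z ≠ a → DifferentiableAt ℂ h z) :
    Continuous (qdK ψ h a) := by
  have hd : Continuous (deriv ψ) := hψ.continuous_deriv le_rfl
  have hns : Continuous fun z : ℂ => normSq (z - a) :=
    continuous_normSq.comp (continuous_id.sub continuous_const)
  rw [continuous_iff_continuousAt]
  intro z
  by_cases hza : z = a
  · have : ∀ᶠ w in 𝓝 z, normSq (w - a) < ε ^ 2 / 4 :=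
      hns.continuousAt.eventually (gt_mem_nhds (by simp [hza]; positivity))
    refine (continuousAt_const (y := (0:ℂ))).congr ?_
    filter_upwards [this] with w hw
    simp [qdK, h1 _ hw]
  by_cases hzb : z ∈ Metric.closedBall a ε
  · have := (hh z hzb hza).continuousAt
    unfold qdK
    refine this.mul ?_
    refine ContinuousAt.mul ?_ (by fun_prop)
    exact (continuous_ofReal.comp (continuous_const.mul (hd.comp hns))).continuousAt
  · refine (continuousAt_const (y := (0:ℂ))).congr ?_
    filter_upwards [Metric.isClosed_closedBall.isOpen_compl.mem_nhds hzb] with w hw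
    exact (qdK_zero_out ψ h a ε hε h0 w fun h' => hw (Metric.ball_subset_closedBall h')).symm

lemma qdK_integral (ψ : ℝ → ℝ) (hψ : ContDiff ℝ 1 ψ) (h : ℂ → ℂ) (a : ℂ) (ε : ℝ) (hε : 0 < ε)
    (h0 : ∀ s, ε ^ 2 / 2 < s → deriv ψ s = 0) (h1 : ∀ s, s < ε ^ 2 / 4 → deriv ψ s = 0)
    (v0 : ψ 0 = 1) (v1 : ψ (ε ^ 2) = 0)
    (hh : ∀ z ∈ Metric.closedBall a ε, z ≠ a → DifferentiableAt ℂ h z) :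
    ∫ z, qdK ψ h a z = I * ∮ z in C(a, ε), h z := by
  have hcont := qdK_continuous ψ hψ h a ε hε h0 h1 hh
  have hcm : ∀ p : ℝ × ℝ, Complex.polarCoord.symm p + a = circleMap a p.1 p.2 := by
    intro p
    rw [Complex.polarCoord_symm_apply, circleMap, Complex.exp_mul_I, add_comm]
    simp
  rw [← integral_add_right_eq_self (qdK ψ h a) a,
    ← Complex.integral_comp_polarCoord_symm]
  simp only [hcm]
  have hcmc : Continuous fun p : ℝ × ℝ => circleMap a p.1 p.2 := by
    unfold circleMap; fun_prop
  have hint : Continuous fun p : ℝ × ℝ => p.1 • qdK ψ h a (circleMap a p.1 p.2) :=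
    continuous_fst.smul (hcont.comp hcmc)
  have e1 : (∫ p in polarCoord.target, p.1 • qdK ψ h a (circleMap a p.1 p.2)) =
      ∫ p in (Set.Ioc 0 ε ×ˢ Set.Ioo (-Real.pi) Real.pi : Set (ℝ × ℝ)),
        p.1 • qdK ψ h a (circleMap a p.1 p.2) := by
    refine setIntegral_eq_of_subset_of_forall_sdiff_eq_zero ?_ ?_ ?_
    · exact polarCoord.open_target.measurableSet
    · rintro ⟨r, t⟩ ⟨hr, ht⟩
      exact ⟨hr.1, ht⟩
    · rintro ⟨r, t⟩ ⟨⟨hr, ht⟩, hn⟩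
      have hr0 : 0 < r := hr
      have : ε < r := by
        by_contra hc
        exact hn ⟨⟨hr, not_lt.1 hc⟩, ht⟩
      rw [qdK_zero_out ψ h a ε hε h0, smul_zero]
      simp [circleMap, abs_of_pos hr0, this.le]
  rw [e1, Measure.volume_eq_prod, setIntegral_prod]
  · have inner : ∀ r ∈ Set.Ioc 0 ε,
        (∫ t in Set.Ioo (-Real.pi) Real.pi, r • qdK ψ h a (circleMap a r t)) =
          ((2 * r * deriv ψ (r ^ 2) : ℝ) : ℂ) * (-I * ∮ z in C(a, ε), h z) := by
      intro r hr
      have hCr : (∮ z in C(a, ε), h z) = ∮ z in C(a, r), h z := by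
        refine circleIntegral_eq_of_differentiable_on_annulus_off_countable hr.1 hr.2
          Set.countable_empty ?_ ?_
        · intro z hz
          refine (hh z hz.1 ?_).continuousAt.continuousWithinAt
          rintro rfl; exact hz.2 (Metric.mem_ball_self hr.1)
        · intro z hz
          refine hh z (Metric.ball_subset_closedBall hz.1.1) ?_
          rintro rfl; exact hz.1.2 (Metric.mem_closedBall_self hr.1.le)
      rw [hCr, circleIntegral, ← integral_Ioc_eq_integral_Ioo,
        ← intervalIntegral.integral_of_le (by linarith [Real.pi_pos])]
      have hp : Function.Periodic (fun t => r • qdK ψ h a (circleMap a r t)) (2 * Real.pi) := by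
        intro t
        simp only [periodic_circleMap a r t]
      have := hp.intervalIntegral_add_eq (-Real.pi) 0
      rw [show -Real.pi + 2 * Real.pi = Real.pi by ring, zero_add] at this
      rw [this, ← mul_assoc, ← intervalIntegral.integral_const_mul]
      refine intervalIntegral.integral_congr fun t _ => ?_
      have hn : normSq (circleMap a r t - a) = r ^ 2 := by
        rw [normSq_eq_norm_sq]; simp [circleMap]
      simp only [qdK, hn, deriv_circleMap]
      simp only [circleMap, add_sub_cancel_left, zero_add, real_smul, smul_eq_mul]
      push_cast
      linear_combination (r * (2 * ((deriv ψ (r ^ 2) : ℝ) : ℂ)) * r * cexp (t * I) * h (a + r * cexp (t * I))) * I_mul_I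
    rw [setIntegral_congr_fun measurableSet_Ioc inner, integral_mul_const,
      integral_complex_ofReal]
    rw [← intervalIntegral.integral_of_le hε.le,
      intervalIntegral.integral_eq_sub_of_hasDerivAt (f := fun r => ψ (r ^ 2))]
    · simp [v0, v1]
    · intro r _
      have := (hψ.differentiable one_ne_zero (r ^ 2)).hasDerivAt.comp r (hasDerivAt_pow 2 r)
      have e : deriv ψ (r ^ 2) * (((2 : ℕ) : ℝ) * r ^ (2 - 1)) = 2 * r * deriv ψ (r ^ 2) := by
        norm_num; ring
      rw [e] at this
      exact this
    · refine Continuous.intervalIntegrable ?_ _ _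
      have := (hψ.continuous_deriv le_rfl).comp (continuous_pow (M := ℝ) 2)
      exact (continuous_const.mul continuous_id).mul this
  · rw [← Measure.volume_eq_prod]
    refine (hint.continuousOn.integrableOn_compact
      (isCompact_Icc.prod isCompact_Icc : IsCompact (Set.Icc 0 ε ×ˢ Set.Icc (-Real.pi) Real.pi))).mono_set ?_
    exact Set.prod_mono Set.Ioc_subset_Icc_self Set.Ioo_subset_Icc_self

lemma qd_psi (ε : ℝ) (hε : 0 < ε) : ∃ ψ : ℝ → ℝ, ContDiff ℝ 1 ψ ∧
    (∀ s, ε ^ 2 / 2 < s → ψ s = 0) ∧ (∀ s, s < ε ^ 2 / 4 → ψ s = 1) := by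
  have h2 : 0 < ε ^ 2 := by positivity
  refine ⟨fun s => Real.smoothTransition (2 - 4 * s / ε ^ 2), ?_, ?_, ?_⟩
  · have : ContDiff ℝ 1 Real.smoothTransition := Real.smoothTransition.contDiff (n := 1)
    refine this.comp ?_
    fun_prop
  · intro s hs
    refine Real.smoothTransition.zero_of_nonpos ?_
    rw [sub_nonpos, le_div_iff₀ h2]; linarith
  · intro s hs
    refine Real.smoothTransition.one_of_one_le ?_
    rw [le_sub_comm, div_le_iff₀ h2]; linarith

lemma qd_phi_deriv (ψ : ℝ → ℝ) (hψ : ContDiff ℝ 1 ψ) (a z : ℂ) :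
    ∃ P : ℂ →L[ℝ] ℂ, HasFDerivAt (fun w : ℂ => ((ψ (normSq (w - a)) : ℝ) : ℂ)) P z ∧
      P 1 + I * P I = (2 * deriv ψ (normSq (z - a)) : ℝ) * (z - a) := by
  have hre : HasFDerivAt (fun w : ℂ => (w - a).re) reCLM z :=
    reCLM.hasFDerivAt.comp z ((hasFDerivAt_id z).sub_const a)
  have him : HasFDerivAt (fun w : ℂ => (w - a).im) imCLM z :=
    imCLM.hasFDerivAt.comp z ((hasFDerivAt_id z).sub_const a)
  have hn := (hre.mul hre).add (him.mul him)
  have hd : HasDerivAt ψ (deriv ψ (normSq (z - a))) (normSq (z - a)) :=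
    (hψ.differentiable one_ne_zero _).hasDerivAt
  have h1 := hd.comp_hasFDerivAt z (f := fun w : ℂ => normSq (w - a)) hn
  have h2 := ofRealCLM.hasFDerivAt.comp z h1
  refine ⟨_, h2, ?_⟩
  apply Complex.ext <;> simp <;> ring

lemma qd_phi_contDiff (ψ : ℝ → ℝ) (hψ : ContDiff ℝ 1 ψ) (a : ℂ) :
    ContDiff ℝ 1 (fun w : ℂ => ((ψ (normSq (w - a)) : ℝ) : ℂ)) := by
  have hn : ContDiff ℝ 1 (fun w : ℂ => normSq (w - a)) := by
    have hre : ContDiff ℝ 1 (fun w : ℂ => (w - a).re) :=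
      reCLM.contDiff.comp (contDiff_id.sub contDiff_const)
    have him : ContDiff ℝ 1 (fun w : ℂ => (w - a).im) :=
      imCLM.contDiff.comp (contDiff_id.sub contDiff_const)
    exact (hre.mul hre).add (him.mul him)
  exact ofRealCLM.contDiff.comp (hψ.comp hn)

/-- If the Schwarz function of `Γ` extends meromorphically to `Ω` (with poles
among finitely many points `a j`), then `Ω` is a quadrature domain: for every `f`
holomorphic on a neighborhood of `closure Ω`,
`(1/π) ∫_Ω f dA = Σ_j (1/(2πi)) ∮_{|z−a_j|=ε} f(z) S(z) dz`. -/
theorem quadrature_identity_of_meromorphic_schwarz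
    (Ω : Set ℂ) (hΩopen : IsOpen Ω) (hΩbdd : Bornology.IsBounded Ω)
    (hΩconn : IsConnected Ω) (hΩsc : SimplyConnectedSpace Ω)
    (γ : ℝ → ℂ) (hγan : ∀ t, AnalyticAt ℝ γ t)
    (hγper : Function.Periodic γ (2 * Real.pi))
    (hγ' : ∀ t, deriv γ t ≠ 0)
    (hΓ : frontier Ω = Set.range γ)
    (hwind : ∀ z ∈ Ω,
      (1 / (2 * Real.pi * Complex.I)) *
        (∫ t in (0:ℝ)..(2 * Real.pi), deriv γ t / (γ t - z)) = 1)
    (n : ℕ) (a : Fin n → ℂ) (ha : ∀ j, a j ∈ Ω) (hainj : Function.Injective a)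
    (V : Set ℂ) (hV : IsOpen V) (hΓV : frontier Ω ⊆ V)
    (S : ℂ → ℂ) (hS : DifferentiableOn ℂ S ((Ω \ Set.range a) ∪ V))
    (hSval : ∀ z ∈ frontier Ω, S z = (starRingEnd ℂ) z)
    (O : Set ℂ) (hO : IsOpen O) (hΩO : closure Ω ⊆ O)
    (f : ℂ → ℂ) (hf : DifferentiableOn ℂ f O)
    (ε : ℝ) (hε : 0 < ε)
    (hballs : ∀ j, Metric.closedBall (a j) ε ⊆ Ω \ V)
    (hdisj : ∀ j k, j ≠ k →
      Disjoint (Metric.closedBall (a j) ε) (Metric.closedBall (a k) ε)) :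
    (1 / (Real.pi : ℂ)) * (∫ ζ in Ω, f ζ) =
      ∑ j : Fin n, (1 / (2 * Real.pi * Complex.I)) *
        (∮ z in C(a j, ε), f z * S z) := by
  
  classical
  obtain ⟨ψ, hψ, hψ0, hψ1⟩ := qd_psi ε hε
  have hd0 : ∀ s, ε ^ 2 / 2 < s → deriv ψ s = 0 := by
    intro s hs
    have : ψ =ᶠ[𝓝 s] fun _ => 0 := by
      filter_upwards [lt_mem_nhds hs] with t ht using hψ0 t ht
    rw [this.deriv_eq]; simp
  have hd1 : ∀ s, s < ε ^ 2 / 4 → deriv ψ s = 0 := by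
    intro s hs
    have : ψ =ᶠ[𝓝 s] fun _ => 1 := by
      filter_upwards [gt_mem_nhds hs] with t ht using hψ1 t ht
    rw [this.deriv_eq]; simp
  have hεsq : 0 < ε ^ 2 := by positivity
  have hns : ∀ c : ℂ, Continuous fun z : ℂ => normSq (z - c) := fun c =>
    continuous_normSq.comp (continuous_id.sub continuous_const)
  have hfar : ∀ j z, z ∉ Metric.closedBall (a j) ε → ε ^ 2 / 2 < normSq (z - a j) := by
    intro j z hz
    rw [Metric.mem_closedBall, dist_eq_norm, not_le] at hz
    rw [normSq_eq_norm_sq]; nlinarith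
  set φ : ℂ → ℂ := fun w => ∑ j, ((ψ (normSq (w - a j)) : ℝ) : ℂ) with hφ
  set T : ℂ → ℂ := fun w => (1 - φ w) * S w with hT
  set F : ℂ → ℂ := fun w => f w * ((starRingEnd ℂ) w - T w) with hF
  have hφc : ContDiff ℝ 1 φ := ContDiff.sum fun j _ => qd_phi_contDiff ψ hψ (a j)
  -- near `a j`, `T` vanishes
  have hTa : ∀ j, T =ᶠ[𝓝 (a j)] fun _ => 0 := by
    intro j
    have e1 : ∀ᶠ w in 𝓝 (a j), normSq (w - a j) < ε ^ 2 / 4 :=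
      (hns (a j)).continuousAt.eventually (gt_mem_nhds (by simp; positivity))
    filter_upwards [e1, Metric.closedBall_mem_nhds (a j) hε] with w hw hwb
    have : φ w = 1 := by
      rw [hφ]
      simp only
      rw [Finset.sum_eq_single j]
      · rw [hψ1 _ hw]; simp
      · intro k _ hk
        rw [hψ0 _ (hfar k w fun h => Set.disjoint_left.1 (hdisj k j hk) h hwb)]; simp
      · simp
    simp [hT, this]
  have hWopen : IsOpen ((Ω \ Set.range a) ∪ V) :=
    (hΩopen.sdiff (Set.finite_range a).isClosed).union hV
  have hSd : ∀ z ∈ closure Ω, z ∉ Set.range a → DifferentiableAt ℂ S z := by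
    intro z hz hza
    refine hS.differentiableAt (hWopen.mem_nhds ?_)
    by_cases h : z ∈ Ω
    · exact Or.inl ⟨h, hza⟩
    · exact Or.inr (hΓV ⟨hz, by rwa [hΩopen.interior_eq]⟩)
  have hSc : ∀ z ∈ closure Ω, z ∉ Set.range a → ContDiffAt ℝ 1 S z := by
    intro z hz hza
    have hzW : z ∈ (Ω \ Set.range a) ∪ V := by
      by_cases h : z ∈ Ω
      · exact Or.inl ⟨h, hza⟩
      · exact Or.inr (hΓV ⟨hz, by rwa [hΩopen.interior_eq]⟩)
    exact ((hS.analyticAt (hWopen.mem_nhds hzW)).contDiffAt (n := 1)).restrict_scalars ℝ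
  have hfc : ∀ z ∈ closure Ω, ContDiffAt ℝ 1 f z := fun z hz =>
    ((hf.analyticAt (hO.mem_nhds (hΩO hz))).contDiffAt (n := 1)).restrict_scalars ℝ
  have hfd : ∀ z ∈ closure Ω, DifferentiableAt ℂ f z := fun z hz =>
    hf.differentiableAt (hO.mem_nhds (hΩO hz))
  have hTc : ∀ z ∈ closure Ω, ContDiffAt ℝ 1 T z := by
    intro z hz
    by_cases hza : z ∈ Set.range a
    · obtain ⟨j, rfl⟩ := hza
      exact contDiffAt_const.congr_of_eventuallyEq (hTa j)
    · exact (contDiffAt_const.sub hφc.contDiffAt).mul (hSc z hz hza)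
  have hconj : ContDiff ℝ 1 (fun w : ℂ => (starRingEnd ℂ) w) := conjCLE.contDiff
  have hFc : ∀ z ∈ closure Ω, ContDiffAt ℝ 1 F z := fun z hz =>
    (hfc z hz).mul (hconj.contDiffAt.sub (hTc z hz))
  have hF0 : ∀ z ∈ frontier Ω, F z = 0 := by
    intro z hz
    have hzV := hΓV hz
    have : φ z = 0 := by
      rw [hφ]
      refine Finset.sum_eq_zero fun j _ => ?_
      rw [hψ0 _ (hfar j z fun h => (hballs j h).2 hzV)]; simp
    simp [hF, hT, this, hSval z hz]
  obtain ⟨K, hK⟩ := qd_lip_global Ω hΩbdd F hFc hF0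
  have hGc : HasCompactSupport (Ω.indicator F) :=
    HasCompactSupport.intro hΩbdd.isCompact_closure fun z hz =>
      Set.indicator_of_notMem (fun h => hz (subset_closure h)) _
  have hnull : volume (frontier Ω) = 0 := by rw [hΓ]; exact qd_null γ hγan
  have hLint : ∀ v : ℂ, IntegrableOn (fun z => fderiv ℝ F z v) Ω := by
    intro v
    have hco : ContinuousOn (fun z => fderiv ℝ F z v) (closure Ω) := by
      intro z hz
      have h1 : ContinuousAt (fderiv ℝ F) z :=
        ((hFc z hz).fderiv_right (m := 0) (by simp)).continuousAt
      exact (h1.clm_apply continuousAt_const).continuousWithinAt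
    exact (hco.integrableOn_compact hΩbdd.isCompact_closure).mono_set subset_closure
  have hstokes : ∀ v : ℂ, ∫ z in Ω, fderiv ℝ F z v = 0 := by
    intro v
    rw [← integral_indicator hΩopen.measurableSet]
    refine qd_stokes (Ω.indicator F) _ K hK hGc v ?_
      ((integrable_indicator_iff hΩopen.measurableSet).2 (hLint v))
    have hae : ∀ᵐ z : ℂ, z ∉ frontier Ω := measure_eq_zero_iff_ae_notMem.1 hnull
    filter_upwards [hae] with z hz
    by_cases hzΩ : z ∈ Ω
    · rw [Set.indicator_of_mem hzΩ]
      have h1 : HasFDerivAt F (fderiv ℝ F z) z :=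
        ((hFc z (subset_closure hzΩ)).differentiableAt one_ne_zero).hasFDerivAt
      have h2 : Ω.indicator F =ᶠ[𝓝 z] F := by
        filter_upwards [hΩopen.mem_nhds hzΩ] with w hw using Set.indicator_of_mem hw _
      exact (h1.congr_of_eventuallyEq h2).hasLineDerivAt v
    · rw [Set.indicator_of_notMem hzΩ]
      have hzc : z ∉ closure Ω := fun h => hz ⟨h, by rwa [hΩopen.interior_eq]⟩
      have h2 : Ω.indicator F =ᶠ[𝓝 z] fun _ => 0 := by
        filter_upwards [isClosed_closure.isOpen_compl.mem_nhds hzc] with w hw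
        exact Set.indicator_of_notMem (fun h => hw (subset_closure h)) _
      have h3 := ((hasFDerivAt_const (𝕜 := ℝ) (0:ℂ) z).congr_of_eventuallyEq h2).hasLineDerivAt v
      simpa using h3
  -- a complex differentiable function has vanishing dbar derivative
  have hdbar : ∀ (g : ℂ → ℂ) (z : ℂ), DifferentiableAt ℂ g z →
      ∃ P : ℂ →L[ℝ] ℂ, HasFDerivAt g P z ∧ P 1 + I * P I = 0 := by
    intro g z hg
    refine ⟨_, hg.hasFDerivAt.restrictScalars ℝ, ?_⟩
    have : (fderiv ℂ g z) I = I * (fderiv ℂ g z) 1 := by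
      have := (fderiv ℂ g z).map_smul I 1
      simpa using this
    simp only [ContinuousLinearMap.coe_restrictScalars']
    rw [this]
    linear_combination (fderiv ℂ g z 1) * I_mul_I
  have hTd : ∀ z ∈ Ω, ∃ P : ℂ →L[ℝ] ℂ, HasFDerivAt T P z ∧
      P 1 + I * P I = - (S z * ∑ j, ((2 * deriv ψ (normSq (z - a j)) : ℝ) : ℂ) * (z - a j)) := by
    intro z hz
    by_cases hza : z ∈ Set.range a
    · obtain ⟨j, rfl⟩ := hza
      refine ⟨0, (hasFDerivAt_const (0:ℂ) (a j)).congr_of_eventuallyEq (hTa j), ?_⟩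
      rw [Finset.sum_eq_zero]
      · simp
      · intro k _
        by_cases hk : k = j
        · simp [hk]
        · rw [hd0 _ (hfar k (a j) fun h => Set.disjoint_left.1 (hdisj k j hk) h
            (Metric.mem_closedBall_self hε.le))]
          simp
    · obtain ⟨PS, hPS, hPS'⟩ := hdbar S z (hSd z (subset_closure hz) hza)
      choose P hP hP' using fun j => qd_phi_deriv ψ hψ (a j) z
      have hsum : HasFDerivAt φ (∑ j, P j) z := HasFDerivAt.fun_sum fun j _ => hP j
      have h1 := (hsum.const_sub 1).mul hPS
      refine ⟨_, h1, ?_⟩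
      rw [← Finset.sum_congr rfl fun j _ => hP' j, Finset.sum_add_distrib, ← Finset.mul_sum]
      simp
      linear_combination (1 - φ z) * hPS'
  have hFd : ∀ z ∈ Ω, fderiv ℝ F z 1 + I * fderiv ℝ F z I =
      2 * f z + ∑ j, qdK ψ (fun w => f w * S w) (a j) z := by
    intro z hz
    obtain ⟨Pf, hPf, hPf'⟩ := hdbar f z (hfd z (subset_closure hz))
    obtain ⟨PT, hPT, hPT'⟩ := hTd z hz
    have hc : HasFDerivAt (fun w : ℂ => (starRingEnd ℂ) w) (conjCLE : ℂ →L[ℝ] ℂ) z :=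
      conjCLE.hasFDerivAt
    have h1 : HasFDerivAt F _ z := hPf.mul (hc.sub hPT)
    rw [h1.fderiv]
    simp only [qdK, mul_assoc (f z) (S z), ← Finset.mul_sum]
    simp
    simp at hPT'
    linear_combination ((starRingEnd ℂ) z - T z) * hPf' - f z * hPT' - f z * I_mul_I
  have hKd : ∀ j, ∀ z ∈ Metric.closedBall (a j) ε, z ≠ a j →
      DifferentiableAt ℂ (fun w => f w * S w) z := by
    intro j z hz hzj
    have hzΩ := subset_closure (hballs j hz).1
    refine (hfd z hzΩ).mul (hSd z hzΩ ?_)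
    rintro ⟨k, rfl⟩
    have hk : k ≠ j := fun h => hzj (by rw [h])
    exact Set.disjoint_left.1 (hdisj k j hk) (Metric.mem_closedBall_self hε.le) hz
  have hKcont : ∀ j, Continuous (qdK ψ (fun w => f w * S w) (a j)) := fun j =>
    qdK_continuous ψ hψ _ (a j) ε hε hd0 hd1 (hKd j)
  have hKint : ∀ j, IntegrableOn (qdK ψ (fun w => f w * S w) (a j)) Ω := fun j =>
    ((hKcont j).continuousOn.integrableOn_compact hΩbdd.isCompact_closure).mono_set subset_closure
  have hKval : ∀ j, ∫ z in Ω, qdK ψ (fun w => f w * S w) (a j) z =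
      I * ∮ z in C(a j, ε), f z * S z := by
    intro j
    rw [← qdK_integral ψ hψ (fun w => f w * S w) (a j) ε hε hd0 hd1
      (hψ1 0 (by positivity)) (hψ0 _ (by linarith)) (hKd j)]
    refine setIntegral_eq_integral_of_forall_compl_eq_zero fun z hz => ?_
    exact qdK_zero_out ψ _ (a j) ε hε hd0 z fun h =>
      hz (hballs j (Metric.ball_subset_closedBall h)).1
  have hfint : IntegrableOn f Ω := by
    have : ContinuousOn f (closure Ω) := fun z hz => (hfd z hz).continuousAt.continuousWithinAt
    exact (this.integrableOn_compact hΩbdd.isCompact_closure).mono_set subset_closure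
  have hmain : 2 * (∫ z in Ω, f z) + ∑ j, I * (∮ z in C(a j, ε), f z * S z) = 0 := by
    calc 2 * (∫ z in Ω, f z) + ∑ j, I * (∮ z in C(a j, ε), f z * S z)
        = ∫ z in Ω, (2 * f z + ∑ j, qdK ψ (fun w => f w * S w) (a j) z) := by
          rw [integral_add (hfint.const_mul 2) (integrable_finsetSum _ fun j _ => hKint j),
            integral_const_mul, integral_finsetSum _ fun j _ => hKint j]
          simp only [hKval]
      _ = ∫ z in Ω, (fderiv ℝ F z 1 + I * fderiv ℝ F z I) :=
          (setIntegral_congr_fun hΩopen.measurableSet hFd).symm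
      _ = 0 := by
          rw [integral_add (hLint 1) ((hLint I).const_mul I), integral_const_mul,
            hstokes, hstokes]
          simp
  rw [← Finset.mul_sum] at hmain ⊢
  have hpi : (Real.pi : ℂ) ≠ 0 := by exact_mod_cast Real.pi_ne_zero
  have h2 : (∫ z in Ω, f z) = (1 / (2 * I)) * ∑ j, (∮ z in C(a j, ε), f z * S z) := by
    field_simp
    linear_combination I * hmain - (∑ j, (∮ z in C(a j, ε), f z * S z)) * I_mul_I
  rw [h2]
  field_simp
end
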